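/- arXiv:2604.00692 — 2 statements merged into one kernel-verified Lean document; each statement's English description precedes it below -/
import Mathlib

section
/- Let ρ be a polynomial weight on ℝ^d, 𝔹 a real Banach space, and 0 ≤ α ≤ γ ≤ 2. Then there is a constant C = C(d, α, γ, φ, ρ) > 0 such that for every f : ℝ^d → 𝔹 with ‖f‖_{C^γ_ρ} < ∞ and every integer n ≥ 1, the mollification f_n := f * φ_n satisfies ‖f_n − f‖_{C^α_ρ} ≤ C·n^{α−γ}·‖f‖_{C^γ_ρ}. -/
open scoped ENNReal

noncomputable section

/-- A polynomial weight: an everywhere positive function comparable to `(1 + ‖x‖) ^ r`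
for some real exponent `r`. -/
def IsPolyWeight {E : Type*} [NormedAddCommGroup E] (ρ : E → ℝ) : Prop :=
  (∀ x, 0 < ρ x) ∧
  ∃ r c C : ℝ, 0 < c ∧ c ≤ C ∧
    ∀ x, c * (1 + ‖x‖) ^ r ≤ ρ x ∧ ρ x ≤ C * (1 + ‖x‖) ^ r

/-- Supremum of `‖g‖` over the unit ball centered at `x`, valued in `ℝ≥0∞`. -/
def ballSup {d : ℕ} {F : Type*} [NormedAddCommGroup F]
    (g : EuclideanSpace ℝ (Fin d) → F) (x : EuclideanSpace ℝ (Fin d)) : ℝ≥0∞ :=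
  ⨆ y ∈ Metric.ball x 1, (‖g y‖₊ : ℝ≥0∞)

/-- Hölder seminorm of exponent `σ` of `g` over the unit ball centered at `x`. -/
def ballHolderSemi {d : ℕ} {F : Type*} [NormedAddCommGroup F]
    (σ : ℝ) (g : EuclideanSpace ℝ (Fin d) → F) (x : EuclideanSpace ℝ (Fin d)) : ℝ≥0∞ :=
  ⨆ y ∈ Metric.ball x 1, ⨆ y' ∈ Metric.ball x 1, ⨆ _ : y ≠ y',
    ENNReal.ofReal (‖g y - g y'‖ / ‖y - y'‖ ^ σ)

/-- The `C^{k+σ}`-norm of `f` on the unit ball centered at `x`: the sum of the sup norms of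
the iterated Fréchet derivatives of order `0,…,k` plus (when `σ > 0`) the `σ`-Hölder
seminorm of the `k`-th derivative. -/
def ballCNorm {d : ℕ} {𝔹 : Type*} [NormedAddCommGroup 𝔹] [NormedSpace ℝ 𝔹]
    (k : ℕ) (σ : ℝ) (f : EuclideanSpace ℝ (Fin d) → 𝔹) (x : EuclideanSpace ℝ (Fin d)) :
    ℝ≥0∞ :=
  (∑ j ∈ Finset.range (k + 1), ballSup (iteratedFDeriv ℝ j f) x)
    + (if 0 < σ then ballHolderSemi σ (iteratedFDeriv ℝ k f) x else 0)

/-- Weighted Hölder norm `‖f‖_{C^{k+σ}_ρ} = sup_x ρ(x)⁻¹ ‖f‖_{C^{k+σ}(B₁(x))}`. -/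
def wNorm {d : ℕ} {𝔹 : Type*} [NormedAddCommGroup 𝔹] [NormedSpace ℝ 𝔹]
    (ρ : EuclideanSpace ℝ (Fin d) → ℝ) (k : ℕ) (σ : ℝ)
    (f : EuclideanSpace ℝ (Fin d) → 𝔹) : ℝ≥0∞ :=
  ⨆ x : EuclideanSpace ℝ (Fin d), (ENNReal.ofReal (ρ x))⁻¹ * ballCNorm k σ f x

/-- Weighted Hölder norm of real order `γ ≥ 0`, splitting `γ = ⌊γ⌋ + (γ - ⌊γ⌋)`. -/
def wNormE {d : ℕ} {𝔹 : Type*} [NormedAddCommGroup 𝔹] [NormedSpace ℝ 𝔹]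
    (ρ : EuclideanSpace ℝ (Fin d) → ℝ) (γ : ℝ)
    (f : EuclideanSpace ℝ (Fin d) → 𝔹) : ℝ≥0∞ :=
  wNorm ρ ⌊γ⌋₊ (γ - ⌊γ⌋₊) f

open MeasureTheory in
/-- Mollification `f_n = f * φ_n` with `φ_n(x) = n^d φ(n x)`. -/
def mollify {d : ℕ} {𝔹 : Type*} [NormedAddCommGroup 𝔹] [NormedSpace ℝ 𝔹]
    [CompleteSpace 𝔹] (φ : EuclideanSpace ℝ (Fin d) → ℝ) (n : ℕ)
    (f : EuclideanSpace ℝ (Fin d) → 𝔹) (x : EuclideanSpace ℝ (Fin d)) : 𝔹 :=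
  ∫ y : EuclideanSpace ℝ (Fin d), ((n : ℝ) ^ d * φ ((n : ℝ) • y)) • f (x - y)

open MeasureTheory

section Smear

variable {d : ℕ} {F G : Type*} [NormedAddCommGroup F] [NormedSpace ℝ F]
  [NormedAddCommGroup G] [NormedSpace ℝ G]
  {ψ : EuclideanSpace ℝ (Fin d) → ℝ} {δ : ℝ} {g : EuclideanSpace ℝ (Fin d) → F}

/-- An even continuous probability density supported in the closed ball of radius `δ`. -/
structure IsMollifier (ψ : EuclideanSpace ℝ (Fin d) → ℝ) (δ : ℝ) : Prop where
  continuous : Continuous ψ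
  nonneg : ∀ y, 0 ≤ ψ y
  integral_eq_one : ∫ y, ψ y = 1
  even : ∀ y, ψ (-y) = ψ y
  norm_le : ∀ y, ψ y ≠ 0 → ‖y‖ ≤ δ

/-- The error `ψ * g - g` made when smoothing `g` with the kernel `ψ`. -/
def smearError (ψ : EuclideanSpace ℝ (Fin d) → ℝ) (g : EuclideanSpace ℝ (Fin d) → F)
    (x : EuclideanSpace ℝ (Fin d)) : F :=
  (∫ y, ψ y • g (x - y)) - g x

namespace IsMollifier

lemma hasCompactSupport (h : IsMollifier ψ δ) : HasCompactSupport ψ := by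
  refine HasCompactSupport.intro (isCompact_closedBall 0 δ) fun y hy => ?_
  by_contra hne
  exact hy (by simpa using h.norm_le y hne)

lemma integrable (h : IsMollifier ψ δ) : Integrable ψ :=
  h.continuous.integrable_of_hasCompactSupport h.hasCompactSupport

lemma integrable_smul (h : IsMollifier ψ δ) (hg : Continuous g) :
    Integrable fun y => ψ y • g y :=
  (h.continuous.smul hg).integrable_of_hasCompactSupport h.hasCompactSupport.smul_right

lemma norm_integral_smul_le (h : IsMollifier ψ δ) {B : ℝ}
    (hB : ∀ y, ‖y‖ ≤ δ → ‖g y‖ ≤ B) : ‖∫ y, ψ y • g y‖ ≤ B := by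
  calc ‖∫ y, ψ y • g y‖ ≤ ∫ y, ψ y * B := by
        refine norm_integral_le_of_norm_le (h.integrable.mul_const B) (ae_of_all _ fun y => ?_)
        rw [norm_smul, Real.norm_of_nonneg (h.nonneg y)]
        by_cases hy : ψ y = 0
        · simp [hy]
        · exact mul_le_mul_of_nonneg_left (hB y (h.norm_le y hy)) (h.nonneg y)
    _ = B := by rw [integral_mul_const, h.integral_eq_one, one_mul]

lemma integral_smul_const [CompleteSpace F] (h : IsMollifier ψ δ) (v : F) :
    ∫ y, ψ y • v = v := by
  rw [_root_.integral_smul_const, h.integral_eq_one, one_smul]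

lemma smearError_eq_integral [CompleteSpace F] (h : IsMollifier ψ δ) (hg : Continuous g)
    (x : EuclideanSpace ℝ (Fin d)) :
    smearError ψ g x = ∫ y, ψ y • (g (x - y) - g x) := by
  simp only [smul_sub]
  rw [integral_sub (h.integrable_smul (g := fun y => g (x - y)) (by fun_prop))
    (h.integrable_smul (g := fun _ => g x) (by fun_prop)), h.integral_smul_const]
  rfl

/-- The first moment of an even kernel vanishes. -/
lemma integral_smul_clm (h : IsMollifier ψ δ) (L : EuclideanSpace ℝ (Fin d) →L[ℝ] F) :
    ∫ y, ψ y • L y = 0 := by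
  have h1 : ∫ y, ψ y • L y = -∫ y, ψ y • L y := by
    conv_lhs => rw [← integral_neg_eq_self]
    simp [h.even, integral_neg]
  have h2 : (2 : ℝ) • ∫ y, ψ y • L y = 0 := by
    rw [two_smul]
    nth_rewrite 1 [h1]
    exact neg_add_cancel _
  exact (smul_eq_zero.mp h2).resolve_left two_ne_zero

lemma hasFDerivAt_smearError (h : IsMollifier ψ δ) (hg : ContDiff ℝ 1 g)
    (x : EuclideanSpace ℝ (Fin d)) :
    HasFDerivAt (smearError ψ g) (smearError ψ (fderiv ℝ g) x) x := by
  have hg' : Continuous (fderiv ℝ g) := hg.continuous_fderiv one_ne_zero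
  have hd : Differentiable ℝ g := hg.differentiable one_ne_zero
  refine HasFDerivAt.sub ?_ (hd x).hasFDerivAt
  obtain ⟨B, hB⟩ := (isCompact_closedBall x (1 + δ)).exists_bound_of_continuousOn
    hg'.continuousOn
  refine hasFDerivAt_integral_of_dominated_of_fderiv_le (bound := fun y => ψ y * B)
    (F' := fun z y => ψ y • fderiv ℝ g (z - y)) (Metric.ball_mem_nhds x one_pos)
    (Filter.Eventually.of_forall fun z => ?_) ?_ ?_ ?_ (h.integrable.mul_const B) ?_
  · exact (h.integrable_smul (g := fun y => g (z - y)) (by fun_prop)).aestronglyMeasurable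
  · exact h.integrable_smul (g := fun y => g (x - y)) (by fun_prop)
  · exact (h.integrable_smul (g := fun y => fderiv ℝ g (x - y))
      (by fun_prop)).aestronglyMeasurable
  · refine ae_of_all _ fun y z hz => ?_
    rw [norm_smul, Real.norm_of_nonneg (h.nonneg y)]
    by_cases hy : ψ y = 0
    · simp [hy]
    refine mul_le_mul_of_nonneg_left (hB _ ?_) (h.nonneg y)
    rw [mem_closedBall_iff_norm, show z - y - x = (z - x) - y by abel]
    exact (norm_sub_le _ _).trans
      (add_le_add (mem_ball_iff_norm.mp hz).le (h.norm_le y hy))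
  · refine ae_of_all _ fun y z _ => HasFDerivAt.const_smul ?_ (ψ y)
    exact ((hd (z - y)).hasFDerivAt.comp z ((hasFDerivAt_id z).sub_const y))

lemma fderiv_smearError (h : IsMollifier ψ δ) (hg : ContDiff ℝ 1 g) :
    fderiv ℝ (smearError ψ g) = smearError ψ (fderiv ℝ g) :=
  funext fun x => (h.hasFDerivAt_smearError hg x).fderiv

lemma smearError_comp_linearIsometryEquiv (L : F ≃ₗᵢ[ℝ] G) :
    smearError ψ (L ∘ g) = L ∘ smearError ψ g := by
  funext x
  have := L.toContinuousLinearEquiv.integral_comp_comm (μ := volume)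
    fun y => ψ y • g (x - y)
  simp only [LinearIsometryEquiv.coe_toContinuousLinearEquiv, map_smul] at this
  simp [smearError, this]

lemma iteratedFDeriv_smearError (h : IsMollifier ψ δ) {j : ℕ} (hg : ContDiff ℝ j g) :
    iteratedFDeriv ℝ j (smearError ψ g) = smearError ψ (iteratedFDeriv ℝ j g) := by
  induction j with
  | zero =>
    rw [iteratedFDeriv_zero_eq_comp, iteratedFDeriv_zero_eq_comp,
      smearError_comp_linearIsometryEquiv]
  | succ j ih =>
    have hj : ContDiff ℝ 1 (iteratedFDeriv ℝ j g) :=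
      hg.iteratedFDeriv_right (by push_cast; rw [add_comm])
    rw [iteratedFDeriv_succ_eq_comp_left, ih (hg.of_le (by exact_mod_cast j.le_succ)),
      iteratedFDeriv_succ_eq_comp_left, h.fderiv_smearError hj]
    exact (smearError_comp_linearIsometryEquiv
      (F := EuclideanSpace ℝ (Fin d) →L[ℝ] EuclideanSpace ℝ (Fin d) [×j]→L[ℝ] F)
      (G := EuclideanSpace ℝ (Fin d) [×(j + 1)]→L[ℝ] F)
      (continuousMultilinearCurryLeftEquiv ℝ (fun _ => EuclideanSpace ℝ (Fin d)) F).symm).symm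

end IsMollifier

end Smear

section Estimates

variable {d : ℕ} {F : Type*} [NormedAddCommGroup F] [NormedSpace ℝ F]
  {ψ : EuclideanSpace ℝ (Fin d) → ℝ} {δ : ℝ} {g : EuclideanSpace ℝ (Fin d) → F}
  {ρ : EuclideanSpace ℝ (Fin d) → ℝ} {R K A s τ : ℝ}

/-- Increments of `g` over distances at most `R` satisfy a weighted Hölder bound with
exponent `s`. -/
def HasIncrementBound (ρ : EuclideanSpace ℝ (Fin d) → ℝ) (R A s : ℝ)
    (g : EuclideanSpace ℝ (Fin d) → F) : Prop :=
  ∀ x y, ‖y - x‖ ≤ R → ‖g y - g x‖ ≤ A * ρ x * ‖y - x‖ ^ s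

/-- The weight varies at most by the factor `K` over distances at most `R`. -/
structure IsSlowlyVarying (ρ : EuclideanSpace ℝ (Fin d) → ℝ) (R K : ℝ) : Prop where
  pos : ∀ x, 0 < ρ x
  le_mul : ∀ x y, ‖y - x‖ ≤ R → ρ y ≤ K * ρ x

lemma IsSlowlyVarying.one_le (hρ : IsSlowlyVarying ρ R K) (hR : 0 ≤ R) : 1 ≤ K := by
  have h := hρ.le_mul 0 0 (by simpa using hR)
  have h0 := hρ.pos 0
  by_contra hK
  nlinarith

lemma rpow_le_rpow_mul_rpow_sub_of_le {r p q : ℝ} (hr : 0 ≤ r) (hrδ : r ≤ δ) (hp : 0 < p)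
    (hpq : p ≤ q) : r ^ q ≤ r ^ p * δ ^ (q - p) := by
  rw [show q = p + (q - p) by ring, Real.rpow_add_of_nonneg hr hp.le (by linarith)]
  simp only [add_sub_cancel_left]
  gcongr

lemma rpow_le_rpow_mul_rpow_sub_of_ge {r p q : ℝ} (hδ : 0 < δ) (hrδ : δ ≤ r) (hp : 0 ≤ p) :
    δ ^ q ≤ r ^ p * δ ^ (q - p) := by
  conv_lhs => rw [show q = p + (q - p) by ring, Real.rpow_add hδ]
  gcongr

namespace IsMollifier

lemma norm_smearError_le [CompleteSpace F] (h : IsMollifier ψ δ) (hρ : ∀ x, 0 < ρ x)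
    (hδR : δ ≤ R) (hA : 0 ≤ A) (hs : 0 ≤ s) (hg : Continuous g)
    (hgs : HasIncrementBound ρ R A s g) (x : EuclideanSpace ℝ (Fin d)) :
    ‖smearError ψ g x‖ ≤ A * ρ x * δ ^ s := by
  rw [h.smearError_eq_integral hg]
  refine h.norm_integral_smul_le (g := fun y => g (x - y) - g x) fun y hy => ?_
  have hxy : ‖x - y - x‖ = ‖y‖ := by simp
  refine (hgs x (x - y) (by linarith)).trans ?_
  rw [hxy]
  have := hρ x
  gcongr

/-- A first order Taylor expansion; the linear term is killed by the symmetry of the kernel. -/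
lemma norm_smearError_le_of_fderiv [CompleteSpace F] (h : IsMollifier ψ δ)
    (hρ : ∀ x, 0 < ρ x) (hδ : 0 < δ) (hδR : δ ≤ R) (hA : 0 ≤ A) (hs : 0 ≤ s)
    (hg : ContDiff ℝ 1 g) (hgs : HasIncrementBound ρ R A s (fderiv ℝ g))
    (x : EuclideanSpace ℝ (Fin d)) :
    ‖smearError ψ g x‖ ≤ A * ρ x * δ ^ (1 + s) := by
  have hd : Differentiable ℝ g := hg.differentiable one_ne_zero
  have hc : Continuous g := hg.continuous
  have key : smearError ψ g x = ∫ y, ψ y • (g (x - y) - g x - fderiv ℝ g x (x - y - x)) := by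
    have hneg : ∀ y, ψ y • (g (x - y) - g x - fderiv ℝ g x (x - y - x))
        = ψ y • (g (x - y) - g x) + ψ y • fderiv ℝ g x y := fun y => by
      rw [show x - y - x = -y by abel, map_neg, sub_neg_eq_add, smul_add]
    simp only [hneg]
    rw [integral_add (h.integrable_smul (g := fun y => g (x - y) - g x) (by fun_prop))
      (h.integrable_smul (by fun_prop)), h.integral_smul_clm, add_zero,
      h.smearError_eq_integral hc]
  rw [key]
  have hρx := hρ x
  refine h.norm_integral_smul_le
    (g := fun y => g (x - y) - g x - fderiv ℝ g x (x - y - x)) fun y hy => ?_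
  have hball : x - y ∈ Metric.closedBall x δ := by simpa using hy
  refine ((convex_closedBall x δ).norm_image_sub_le_of_norm_fderiv_le'
    (C := A * ρ x * δ ^ s) (fun z _ => hd z) (fun z hz => ?_)
    (Metric.mem_closedBall_self hδ.le) hball).trans ?_
  · rw [mem_closedBall_iff_norm] at hz
    refine (hgs x z (hz.trans hδR)).trans ?_
    gcongr
  · rw [Real.rpow_add hδ, Real.rpow_one, mul_comm δ, ← mul_assoc]
    have hxy : ‖x - y - x‖ ≤ δ := by simpa using hy
    gcongr

lemma norm_smearError_sub_le_of_le {B q : ℝ} (hρ : IsSlowlyVarying ρ R K)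
    (hB : 0 ≤ B) (hδ : 0 < δ) (hτ : 0 ≤ τ)
    (hsup : ∀ x, ‖smearError ψ g x‖ ≤ B * ρ x * δ ^ q) {x y : EuclideanSpace ℝ (Fin d)}
    (hxy : ‖y - x‖ ≤ R) (hfar : δ ≤ ‖y - x‖) :
    ‖smearError ψ g y - smearError ψ g x‖
      ≤ (1 + K) * B * ρ x * (‖y - x‖ ^ τ * δ ^ (q - τ)) := by
  have hρx := hρ.pos x
  have hK := hρ.one_le (hδ.le.trans (hfar.trans hxy))
  calc ‖smearError ψ g y - smearError ψ g x‖ ≤ B * ρ y * δ ^ q + B * ρ x * δ ^ q :=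
        (norm_sub_le _ _).trans (add_le_add (hsup y) (hsup x))
    _ ≤ B * (K * ρ x) * δ ^ q + B * ρ x * δ ^ q := by
        gcongr
        exact hρ.le_mul x y hxy
    _ = (1 + K) * B * ρ x * δ ^ q := by ring
    _ ≤ _ := by
        gcongr
        exact rpow_le_rpow_mul_rpow_sub_of_ge hδ hfar hτ

lemma norm_smearError_sub_le [CompleteSpace F] (h : IsMollifier ψ δ)
    (hρ : IsSlowlyVarying ρ R K) (hδ : 0 < δ) (hδR : δ ≤ R) (hA : 0 ≤ A) (hτ : 0 < τ)
    (hτs : τ ≤ s) (hg : Continuous g) (hgs : HasIncrementBound ρ R A s g)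
    {x y : EuclideanSpace ℝ (Fin d)} (hxy : ‖y - x‖ ≤ R) :
    ‖smearError ψ g y - smearError ψ g x‖
      ≤ (1 + K) * A * ρ x * (‖y - x‖ ^ τ * δ ^ (s - τ)) := by
  have hs : 0 ≤ s := hτ.le.trans hτs
  have hρx := hρ.pos x
  have hK := hρ.one_le (hδ.le.trans hδR)
  rcases le_total δ ‖y - x‖ with hfar | hnear
  · exact norm_smearError_sub_le_of_le hρ hA hδ hτ.le
      (h.norm_smearError_le hρ.pos hδR hA hs hg hgs) hxy hfar
  have hconv : ‖∫ z, ψ z • (g (y - z) - g (x - z))‖ ≤ A * (K * ρ x) * ‖y - x‖ ^ s := by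
    refine h.norm_integral_smul_le (g := fun z => g (y - z) - g (x - z)) fun z hz => ?_
    have hyx : y - z - (x - z) = y - x := by abel
    refine (hgs (x - z) (y - z) (by rwa [hyx])).trans ?_
    rw [hyx]
    gcongr
    exact hρ.le_mul x (x - z) (by simpa using hz.trans hδR)
  have hsplit : smearError ψ g y - smearError ψ g x
      = (∫ z, ψ z • (g (y - z) - g (x - z))) - (g y - g x) := by
    simp only [smul_sub]
    rw [integral_sub (h.integrable_smul (g := fun z => g (y - z)) (by fun_prop))
      (h.integrable_smul (g := fun z => g (x - z)) (by fun_prop))]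
    simp only [smearError]
    abel
  calc ‖smearError ψ g y - smearError ψ g x‖
      ≤ A * (K * ρ x) * ‖y - x‖ ^ s + A * ρ x * ‖y - x‖ ^ s := by
        rw [hsplit]
        exact (norm_sub_le _ _).trans (add_le_add hconv (hgs x y hxy))
    _ = (1 + K) * A * ρ x * ‖y - x‖ ^ s := by ring
    _ ≤ _ := by
        gcongr
        exact rpow_le_rpow_mul_rpow_sub_of_le (norm_nonneg _) hnear hτ hτs

lemma norm_smearError_sub_le_of_fderiv [CompleteSpace F] (h : IsMollifier ψ δ)
    (hρ : IsSlowlyVarying ρ R K) (hδ : 0 < δ) (hδR : δ ≤ R) (hA : 0 ≤ A) (hs : 0 ≤ s)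
    (hτ : 0 < τ) (hτ1 : τ ≤ 1) (hg : ContDiff ℝ 1 g)
    (hgs : HasIncrementBound ρ R A s (fderiv ℝ g))
    {x y : EuclideanSpace ℝ (Fin d)} (hxy : ‖y - x‖ ≤ R) :
    ‖smearError ψ g y - smearError ψ g x‖
      ≤ (1 + K) * A * ρ x * (‖y - x‖ ^ τ * δ ^ (1 + s - τ)) := by
  have hρx := hρ.pos x
  have hK := hρ.one_le (hδ.le.trans hδR)
  rcases le_total δ ‖y - x‖ with hfar | hnear
  · exact norm_smearError_sub_le_of_le hρ hA hδ hτ.le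
      (h.norm_smearError_le_of_fderiv hρ.pos hδ hδR hA hs hg hgs) hxy hfar
  have hbound : ∀ z ∈ Metric.closedBall x R,
      ‖fderiv ℝ (smearError ψ g) z‖ ≤ A * (K * ρ x) * δ ^ s := fun z hz => by
    rw [h.fderiv_smearError hg]
    refine (h.norm_smearError_le hρ.pos hδR hA hs (hg.continuous_fderiv one_ne_zero)
      hgs z).trans ?_
    gcongr
    exact hρ.le_mul x z (mem_closedBall_iff_norm.mp hz)
  calc ‖smearError ψ g y - smearError ψ g x‖
      ≤ A * (K * ρ x) * δ ^ s * ‖y - x‖ :=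
        (convex_closedBall x R).norm_image_sub_le_of_norm_fderiv_le
          (fun z _ => (h.hasFDerivAt_smearError hg z).differentiableAt) hbound
          (Metric.mem_closedBall_self (hδ.le.trans hδR)) (mem_closedBall_iff_norm.mpr hxy)
    _ = K * A * ρ x * (δ ^ s * ‖y - x‖ ^ (1 : ℝ)) := by rw [Real.rpow_one]; ring
    _ ≤ (1 + K) * A * ρ x * (δ ^ s * (‖y - x‖ ^ τ * δ ^ (1 - τ))) := by
        gcongr
        · linarith
        · exact rpow_le_rpow_mul_rpow_sub_of_le (norm_nonneg _) hnear hτ hτ1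
    _ = _ := by
        rw [show 1 + s - τ = s + (1 - τ) by ring, Real.rpow_add hδ]
        ring

end IsMollifier

end Estimates

section WeightedNorm

variable {d : ℕ} {𝔹 : Type*} [NormedAddCommGroup 𝔹] [NormedSpace ℝ 𝔹]
  {ρ : EuclideanSpace ℝ (Fin d) → ℝ} {f : EuclideanSpace ℝ (Fin d) → 𝔹}
  {k j : ℕ} {σ τ R K δ : ℝ} {ψ : EuclideanSpace ℝ (Fin d) → ℝ}

lemma one_add_norm_rpow_le {E : Type*} [NormedAddCommGroup E] {R : ℝ} (r : ℝ) {x y : E}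
    (hxy : ‖y - x‖ ≤ R) : (1 + ‖y‖) ^ r ≤ (1 + R) ^ |r| * (1 + ‖x‖) ^ r := by
  have hx := norm_nonneg x
  have hy := norm_nonneg y
  have hR : 0 ≤ R := (norm_nonneg _).trans hxy
  have hyx : 1 + ‖y‖ ≤ (1 + R) * (1 + ‖x‖) := by
    have := norm_le_norm_add_norm_sub' y x
    nlinarith
  have hxy' : 1 + ‖x‖ ≤ (1 + R) * (1 + ‖y‖) := by
    have := norm_le_norm_add_norm_sub y x
    nlinarith
  rcases le_total 0 r with hr | hr
  · rw [abs_of_nonneg hr, ← Real.mul_rpow (by positivity) (by positivity)]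
    exact Real.rpow_le_rpow (by positivity) hyx hr
  · rw [abs_of_nonpos hr, Real.rpow_neg (by positivity),
      ← Real.inv_rpow (by positivity), ← Real.mul_rpow (by positivity) (by positivity)]
    refine Real.rpow_le_rpow_of_nonpos (by positivity) ?_ hr
    rwa [inv_mul_le_iff₀ (by positivity)]

lemma IsPolyWeight.exists_isSlowlyVarying (hρ : IsPolyWeight ρ) (R : ℝ) :
    ∃ K, IsSlowlyVarying ρ R K := by
  obtain ⟨hpos, r, c, C, hc, hcC, h⟩ := hρ
  refine ⟨C * (1 + R) ^ |r| / c, hpos, fun x y hxy => ?_⟩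
  have hR : 0 ≤ R := (norm_nonneg _).trans hxy
  have hC : 0 < C := hc.trans_le hcC
  calc ρ y ≤ C * (1 + ‖y‖) ^ r := (h y).2
    _ ≤ C * ((1 + R) ^ |r| * (1 + ‖x‖) ^ r) := by
        gcongr
        exact one_add_norm_rpow_le r hxy
    _ = C * (1 + R) ^ |r| / c * (c * (1 + ‖x‖) ^ r) := by field_simp
    _ ≤ C * (1 + R) ^ |r| / c * ρ x := by
        gcongr
        exact (h x).1

lemma ballCNorm_le_wNorm (hρ : ∀ x, 0 < ρ x) (hf : wNorm ρ k σ f ≠ ⊤)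
    (x : EuclideanSpace ℝ (Fin d)) :
    ballCNorm k σ f x ≤ ENNReal.ofReal ((wNorm ρ k σ f).toReal * ρ x) := by
  have h : (ENNReal.ofReal (ρ x))⁻¹ * ballCNorm k σ f x ≤ wNorm ρ k σ f :=
    le_iSup (fun x => (ENNReal.ofReal (ρ x))⁻¹ * ballCNorm k σ f x) x
  rw [ENNReal.ofReal_mul ENNReal.toReal_nonneg, ENNReal.ofReal_toReal hf, mul_comm]
  rwa [ENNReal.inv_mul_le_iff (by simpa using hρ x) ENNReal.ofReal_ne_top] at h

lemma norm_iteratedFDeriv_le_wNorm (hρ : ∀ x, 0 < ρ x) (hf : wNorm ρ k σ f ≠ ⊤)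
    (hj : j ≤ k) (x : EuclideanSpace ℝ (Fin d)) :
    ‖iteratedFDeriv ℝ j f x‖ ≤ (wNorm ρ k σ f).toReal * ρ x := by
  have hx := hρ x
  rw [← ENNReal.ofReal_le_ofReal_iff (by positivity)]
  refine le_trans ?_ (ballCNorm_le_wNorm hρ hf x)
  refine le_trans ?_ le_self_add
  refine le_trans ?_ (Finset.single_le_sum (f := fun j => ballSup (iteratedFDeriv ℝ j f) x)
    (fun _ _ => zero_le) (Finset.mem_range_succ_iff.mpr hj))
  rw [ofReal_norm]
  exact le_iSup₂ (f := fun y (_ : y ∈ Metric.ball x 1) => (‖iteratedFDeriv ℝ j f y‖₊ : ℝ≥0∞))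
    x (Metric.mem_ball_self one_pos)

lemma norm_iteratedFDeriv_sub_le_wNorm (hρ : ∀ x, 0 < ρ x) (hf : wNorm ρ k σ f ≠ ⊤)
    (hσ : 0 < σ) {x y : EuclideanSpace ℝ (Fin d)} (hxy : ‖y - x‖ < 1) :
    ‖iteratedFDeriv ℝ k f y - iteratedFDeriv ℝ k f x‖
      ≤ (wNorm ρ k σ f).toReal * ρ x * ‖y - x‖ ^ σ := by
  have hx := hρ x
  rcases eq_or_ne y x with rfl | hne
  · simp only [sub_self, norm_zero]
    positivity
  have hpos : 0 < ‖y - x‖ ^ σ := Real.rpow_pos_of_pos (norm_pos_iff.mpr (sub_ne_zero.mpr hne)) _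
  rw [← div_le_iff₀ hpos, ← ENNReal.ofReal_le_ofReal_iff (by positivity)]
  refine le_trans ?_ (ballCNorm_le_wNorm hρ hf x)
  refine le_trans ?_ le_add_self
  rw [if_pos hσ, ballHolderSemi]
  exact le_iSup₂_of_le y (mem_ball_iff_norm.mpr hxy)
    (le_iSup₂_of_le x (Metric.mem_ball_self one_pos) (le_iSup_of_le hne le_rfl))

lemma ballCNorm_le_ofReal {B : ℝ} {x : EuclideanSpace ℝ (Fin d)} (hB : 0 ≤ B)
    (hsup : ∀ j ≤ k, ∀ y ∈ Metric.ball x 1, ‖iteratedFDeriv ℝ j f y‖ ≤ B)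
    (hsemi : 0 < σ → ∀ y ∈ Metric.ball x 1, ∀ z ∈ Metric.ball x 1,
      ‖iteratedFDeriv ℝ k f y - iteratedFDeriv ℝ k f z‖ ≤ B * ‖y - z‖ ^ σ) :
    ballCNorm k σ f x ≤ ENNReal.ofReal ((k + 2) * B) := by
  have h1 : ∑ j ∈ Finset.range (k + 1), ballSup (iteratedFDeriv ℝ j f) x
      ≤ ENNReal.ofReal ((k + 1) * B) := by
    refine (Finset.sum_le_card_nsmul _ _ (ENNReal.ofReal B) fun j hj => ?_).trans ?_
    · refine iSup₂_le fun y hy => ?_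
      rw [← enorm_eq_nnnorm, ← ofReal_norm]
      exact ENNReal.ofReal_le_ofReal (hsup j (Finset.mem_range_succ_iff.mp hj) y hy)
    · rw [Finset.card_range, ← ENNReal.ofReal_nsmul, nsmul_eq_mul]
      push_cast
      exact le_rfl
  have h2 : (if 0 < σ then ballHolderSemi σ (iteratedFDeriv ℝ k f) x else 0)
      ≤ ENNReal.ofReal B := by
    split_ifs with hσ
    · refine iSup₂_le fun y hy => iSup₂_le fun z hz => iSup_le fun hne =>
        ENNReal.ofReal_le_ofReal ?_
      rw [div_le_iff₀ (Real.rpow_pos_of_pos (norm_pos_iff.mpr (sub_ne_zero.mpr hne)) _)]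
      exact hsemi hσ y hy z hz
    · exact zero_le
  calc ballCNorm k σ f x ≤ ENNReal.ofReal ((k + 1) * B) + ENNReal.ofReal B := add_le_add h1 h2
    _ = ENNReal.ofReal ((k + 2) * B) := by
        rw [← ENNReal.ofReal_add (by positivity) hB]
        congr 1
        ring

lemma hasIncrementBound_iteratedFDeriv (hρ : IsSlowlyVarying ρ R K)
    (hf : wNorm ρ k σ f ≠ ⊤) (hσ : 0 ≤ σ) :
    HasIncrementBound ρ R ((1 + K) * (wNorm ρ k σ f).toReal) σ (iteratedFDeriv ℝ k f) := by
  intro x y hxy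
  have hρx := hρ.pos x
  have hK := hρ.one_le ((norm_nonneg _).trans hxy)
  have hM : 0 ≤ (wNorm ρ k σ f).toReal := ENNReal.toReal_nonneg
  by_cases hnear : 0 < σ ∧ ‖y - x‖ < 1
  · refine (norm_iteratedFDeriv_sub_le_wNorm hρ.pos hf hnear.1 hnear.2).trans ?_
    gcongr
    nlinarith
  have hone : 1 ≤ ‖y - x‖ ^ σ := by
    rcases hσ.eq_or_lt with rfl | hσ'
    · simp
    · exact Real.one_le_rpow (not_lt.mp fun hlt => hnear ⟨hσ', hlt⟩) hσ
  calc ‖iteratedFDeriv ℝ k f y - iteratedFDeriv ℝ k f x‖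
      ≤ (wNorm ρ k σ f).toReal * ρ y + (wNorm ρ k σ f).toReal * ρ x :=
        (norm_sub_le _ _).trans (add_le_add (norm_iteratedFDeriv_le_wNorm hρ.pos hf le_rfl y)
          (norm_iteratedFDeriv_le_wNorm hρ.pos hf le_rfl x))
    _ ≤ (wNorm ρ k σ f).toReal * (K * ρ x) + (wNorm ρ k σ f).toReal * ρ x := by
        gcongr
        exact hρ.le_mul x y hxy
    _ = (1 + K) * (wNorm ρ k σ f).toReal * ρ x * 1 := by ring
    _ ≤ _ := by gcongr

lemma hasIncrementBound_one_iteratedFDeriv (hρ : IsSlowlyVarying ρ R K)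
    (hfk : ContDiff ℝ k f) (hf : wNorm ρ k σ f ≠ ⊤) (hj : j + 1 ≤ k) :
    HasIncrementBound ρ R ((1 + K) * (wNorm ρ k σ f).toReal) 1 (iteratedFDeriv ℝ j f) := by
  intro x y hxy
  have hρx := hρ.pos x
  have hR := (norm_nonneg _).trans hxy
  have hM : 0 ≤ (wNorm ρ k σ f).toReal := ENNReal.toReal_nonneg
  rw [Real.rpow_one]
  refine (convex_closedBall x R).norm_image_sub_le_of_norm_fderiv_le
    (fun z _ => hfk.differentiable_iteratedFDeriv (by exact_mod_cast hj) z) (fun z hz => ?_)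
    (Metric.mem_closedBall_self hR) (mem_closedBall_iff_norm.mpr hxy)
  rw [norm_fderiv_iteratedFDeriv]
  have hz' := hρ.le_mul x z (mem_closedBall_iff_norm.mp hz)
  calc ‖iteratedFDeriv ℝ (j + 1) f z‖ ≤ (wNorm ρ k σ f).toReal * ρ z :=
        norm_iteratedFDeriv_le_wNorm hρ.pos hf hj z
    _ ≤ (wNorm ρ k σ f).toReal * ((1 + K) * ρ x) := by
        gcongr
        linarith
    _ = _ := by ring

lemma HasIncrementBound.fderiv_iteratedFDeriv {A s : ℝ}
    (h : HasIncrementBound ρ R A s (iteratedFDeriv ℝ (j + 1) f)) :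
    HasIncrementBound ρ R A s (fderiv ℝ (iteratedFDeriv ℝ j f)) := by
  intro x y hxy
  have := h x y hxy
  rwa [iteratedFDeriv_succ_eq_comp_left, Function.comp_apply, Function.comp_apply,
    ← dist_eq_norm, LinearIsometryEquiv.dist_map, dist_eq_norm] at this

variable [CompleteSpace 𝔹]

lemma IsMollifier.norm_smearError_iteratedFDeriv_le (h : IsMollifier ψ δ)
    (hρ : IsSlowlyVarying ρ R K) (hδ : 0 < δ) (hδR : δ ≤ R) (hfk : ContDiff ℝ k f)
    (hf : wNorm ρ k σ f ≠ ⊤) (hσ : 0 ≤ σ) (hk : k + σ ≤ 2) (hj : j ≤ k)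
    (x : EuclideanSpace ℝ (Fin d)) :
    ‖smearError ψ (iteratedFDeriv ℝ j f) x‖
      ≤ (1 + K) * (wNorm ρ k σ f).toReal * ρ x * δ ^ (k + σ - j) := by
  have hK := hρ.one_le (hδ.le.trans hδR)
  have hA : 0 ≤ (1 + K) * (wNorm ρ k σ f).toReal := by positivity
  have hk2 : k ≤ 2 := by exact_mod_cast (by linarith : (k : ℝ) ≤ 2)
  have hC1 : j + 1 ≤ k → ContDiff ℝ 1 (iteratedFDeriv ℝ j f) := fun hjk =>
    hfk.iteratedFDeriv_right (by rw [add_comm]; exact_mod_cast hjk)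
  obtain rfl | rfl | ⟨rfl, rfl⟩ : j = k ∨ k = j + 1 ∨ (j = 0 ∧ k = 2) := by omega
  · rw [show (j : ℝ) + σ - j = σ by ring]
    exact h.norm_smearError_le hρ.pos hδR hA hσ (hfk.continuous_iteratedFDeriv le_rfl)
      (hasIncrementBound_iteratedFDeriv hρ hf hσ) x
  · rw [show ((j + 1 : ℕ) : ℝ) + σ - j = 1 + σ by push_cast; ring]
    exact h.norm_smearError_le_of_fderiv hρ.pos hδ hδR hA hσ (hC1 le_rfl)
      (hasIncrementBound_iteratedFDeriv hρ hf hσ).fderiv_iteratedFDeriv x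
  · obtain rfl : σ = 0 := by push_cast at hk; linarith
    rw [show ((2 : ℕ) : ℝ) + 0 - (0 : ℕ) = 1 + 1 by norm_num]
    exact h.norm_smearError_le_of_fderiv hρ.pos hδ hδR hA zero_le_one (hC1 (by norm_num))
      (hasIncrementBound_one_iteratedFDeriv hρ hfk hf le_rfl).fderiv_iteratedFDeriv x

lemma IsMollifier.norm_smearError_iteratedFDeriv_sub_le (h : IsMollifier ψ δ)
    (hρ : IsSlowlyVarying ρ R K) (hδ : 0 < δ) (hδR : δ ≤ R) (hfk : ContDiff ℝ k f)
    (hf : wNorm ρ k σ f ≠ ⊤) (hσ : 0 ≤ σ) (hk : k + σ ≤ 2) (hj : j ≤ k) (hτ : 0 < τ)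
    (hτ1 : τ ≤ 1) (hjτ : j + τ ≤ k + σ) {x y : EuclideanSpace ℝ (Fin d)}
    (hxy : ‖y - x‖ ≤ R) :
    ‖smearError ψ (iteratedFDeriv ℝ j f) y - smearError ψ (iteratedFDeriv ℝ j f) x‖
      ≤ (1 + K) * ((1 + K) * (wNorm ρ k σ f).toReal) * ρ x
        * (‖y - x‖ ^ τ * δ ^ (k + σ - j - τ)) := by
  have hK := hρ.one_le (hδ.le.trans hδR)
  have hA : 0 ≤ (1 + K) * (wNorm ρ k σ f).toReal := by positivity
  have hk2 : k ≤ 2 := by exact_mod_cast (by linarith : (k : ℝ) ≤ 2)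
  have hC1 : j + 1 ≤ k → ContDiff ℝ 1 (iteratedFDeriv ℝ j f) := fun hjk =>
    hfk.iteratedFDeriv_right (by rw [add_comm]; exact_mod_cast hjk)
  obtain rfl | rfl | ⟨rfl, rfl⟩ : j = k ∨ k = j + 1 ∨ (j = 0 ∧ k = 2) := by omega
  · rw [show (j : ℝ) + σ - j = σ by ring]
    exact h.norm_smearError_sub_le hρ hδ hδR hA hτ (by linarith)
      (hfk.continuous_iteratedFDeriv le_rfl) (hasIncrementBound_iteratedFDeriv hρ hf hσ) hxy
  · rw [show ((j + 1 : ℕ) : ℝ) + σ - j = 1 + σ by push_cast; ring]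
    exact h.norm_smearError_sub_le_of_fderiv hρ hδ hδR hA hσ hτ hτ1 (hC1 le_rfl)
      (hasIncrementBound_iteratedFDeriv hρ hf hσ).fderiv_iteratedFDeriv hxy
  · obtain rfl : σ = 0 := by push_cast at hk; linarith
    rw [show ((2 : ℕ) : ℝ) + 0 - (0 : ℕ) = 1 + 1 by norm_num]
    exact h.norm_smearError_sub_le_of_fderiv hρ hδ hδR hA zero_le_one hτ hτ1
      (hC1 (by norm_num))
      (hasIncrementBound_one_iteratedFDeriv hρ hfk hf le_rfl).fderiv_iteratedFDeriv hxy

end WeightedNorm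

lemma isMollifier_rescale {d : ℕ} {φ : EuclideanSpace ℝ (Fin d) → ℝ} {R : ℝ}
    (h : IsMollifier φ R) {n : ℕ} (hn : 1 ≤ n) :
    IsMollifier (fun y => (n : ℝ) ^ d * φ ((n : ℝ) • y)) (R / n) := by
  have hn0 : (0 : ℝ) < n := by exact_mod_cast hn
  have hc := h.continuous
  refine ⟨by fun_prop, fun y => mul_nonneg (by positivity) (h.nonneg _), ?_, fun y => ?_,
    fun y hy => ?_⟩
  · rw [integral_const_mul, Measure.integral_comp_smul, h.integral_eq_one,
      finrank_euclideanSpace_fin, abs_of_pos (by positivity), smul_eq_mul, mul_one,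
      mul_inv_cancel₀ (by positivity)]
  · rw [smul_neg, h.even]
  · have := h.norm_le _ (right_ne_zero_of_mul hy)
    rw [norm_smul, Real.norm_of_nonneg hn0.le] at this
    rwa [le_div_iff₀' hn0]

lemma div_rpow_le_sq_mul_rpow {R q p : ℝ} {n : ℕ} (hn : 1 ≤ n) (hR : 1 ≤ R) (hpq : p ≤ q)
    (hq : q ≤ 2) : (R / n) ^ q ≤ R ^ 2 * (n : ℝ) ^ (-p) := by
  have hn1 : (1 : ℝ) ≤ n := by exact_mod_cast hn
  rw [div_eq_mul_inv, Real.mul_rpow (by positivity) (by positivity),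
    Real.inv_rpow (by positivity), ← Real.rpow_neg (by positivity), ← Real.rpow_two]
  gcongr

/-- Approximation estimate for mollifications:
`‖f_n − f‖_{C^α_ρ} ≤ C n^{α−γ} ‖f‖_{C^γ_ρ}` for `0 ≤ α ≤ γ ≤ 2`. -/
theorem mollify_approx {d : ℕ} {𝔹 : Type*} [NormedAddCommGroup 𝔹] [NormedSpace ℝ 𝔹]
    [CompleteSpace 𝔹]
    (ρ : EuclideanSpace ℝ (Fin d) → ℝ) (hρ : IsPolyWeight ρ)
    (α γ : ℝ) (hα : 0 ≤ α) (hαγ : α ≤ γ) (hγ : γ ≤ 2)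
    (φ : EuclideanSpace ℝ (Fin d) → ℝ)
    (hφsmooth : ContDiff ℝ (⊤ : ℕ∞) φ) (hφsupp : HasCompactSupport φ)
    (hφpos : ∀ x, 0 ≤ φ x) (hφint : ∫ x : EuclideanSpace ℝ (Fin d), φ x = 1)
    (hφsymm : ∀ x, φ (-x) = φ x) :
    ∃ C : ℝ, 0 < C ∧
      ∀ f : EuclideanSpace ℝ (Fin d) → 𝔹,
        ContDiff ℝ (⌊γ⌋₊ : ℕ∞) f → wNormE ρ γ f ≠ ⊤ →
        ∀ n : ℕ, 1 ≤ n →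
          wNormE ρ α (fun x => mollify φ n f x - f x)
            ≤ ENNReal.ofReal (C * (n : ℝ) ^ (α - γ)) * wNormE ρ γ f := by
  obtain ⟨R₀, hR₀⟩ := hφsupp.isCompact.isBounded.exists_norm_le
  obtain ⟨R, hR2, hR₀R⟩ : ∃ R, 2 ≤ R ∧ R₀ ≤ R := ⟨max 2 R₀, le_max_left _ _, le_max_right _ _⟩
  have hφ : IsMollifier φ R := ⟨hφsmooth.continuous, hφpos, hφint, hφsymm,
    fun y hy => (hR₀ y (subset_tsupport φ hy)).trans hR₀R⟩
  obtain ⟨K, hρK⟩ := hρ.exists_isSlowlyVarying R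
  have hK := hρK.one_le (by linarith)
  refine ⟨(⌊α⌋₊ + 2) * ((1 + K) ^ 3 * R ^ 2), by positivity, fun f hfγ hf n hn => ?_⟩
  set k := ⌊γ⌋₊
  set j₀ := ⌊α⌋₊
  have hn0 : (0 : ℝ) < n := by exact_mod_cast hn
  have hn1 : (1 : ℝ) ≤ n := by exact_mod_cast hn
  have hfk : ContDiff ℝ k f := by exact_mod_cast hfγ
  have hσ : 0 ≤ γ - k := sub_nonneg.mpr (Nat.floor_le (hα.trans hαγ))
  have hkγ : (k : ℝ) + (γ - k) = γ := by ring
  have hj₀ : (j₀ : ℝ) ≤ α := Nat.floor_le hα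
  have hj₀k : j₀ ≤ k := Nat.floor_mono hαγ
  have hδ : 0 < R / n := by positivity
  have hδR : R / n ≤ R := div_le_self (by linarith) hn1
  have hψ := isMollifier_rescale hφ hn
  set ψ : EuclideanSpace ℝ (Fin d) → ℝ := fun y => (n : ℝ) ^ d * φ ((n : ℝ) • y)
  have hD : ∀ j ≤ j₀, iteratedFDeriv ℝ j (fun x => mollify φ n f x - f x)
      = smearError ψ (iteratedFDeriv ℝ j f) := fun j hj =>
    hψ.iteratedFDeriv_smearError (hfk.of_le (by exact_mod_cast hj.trans hj₀k))
  unfold wNormE at hf ⊢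
  set M := (wNorm ρ k (γ - k) f).toReal with hM
  have hM0 : 0 ≤ M := ENNReal.toReal_nonneg
  refine iSup_le fun x => ?_
  have hρx := hρK.pos x
  have hball : ballCNorm j₀ (α - j₀) (fun x => mollify φ n f x - f x) x
      ≤ ENNReal.ofReal ((j₀ + 2) * ((1 + K) ^ 3 * R ^ 2 * (n : ℝ) ^ (α - γ) * M * ρ x)) := by
    refine ballCNorm_le_ofReal (by positivity) (fun j hj y hy => ?_)
      (fun hτ y hy z hz => ?_)
    · rw [hD j hj]
      have hjα : (j : ℝ) ≤ α := le_trans (by exact_mod_cast hj) hj₀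
      have hρy : ρ y ≤ K * ρ x :=
        hρK.le_mul x y ((mem_ball_iff_norm.mp hy).le.trans (by linarith))
      have hpow : (R / n) ^ (γ - j) ≤ R ^ 2 * (n : ℝ) ^ (α - γ) := by
        rw [← neg_sub γ α]
        exact div_rpow_le_sq_mul_rpow hn (by linarith) (by linarith)
          (by linarith [j.cast_nonneg (α := ℝ)])
      have hmain := hψ.norm_smearError_iteratedFDeriv_le hρK hδ hδR hfk hf hσ
        (by linarith) (hj.trans hj₀k) y
      rw [hkγ] at hmain
      calc ‖smearError ψ (iteratedFDeriv ℝ j f) y‖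
          ≤ (1 + K) * M * ρ y * (R / n) ^ (γ - j) := hmain
        _ ≤ (1 + K) * M * ((1 + K) ^ 2 * ρ x) * (R ^ 2 * (n : ℝ) ^ (α - γ)) := by
            gcongr
            refine hρy.trans ?_
            gcongr
            nlinarith
        _ = _ := by ring
    · rw [hD j₀ le_rfl]
      have hρz : ρ z ≤ K * ρ x :=
        hρK.le_mul x z ((mem_ball_iff_norm.mp hz).le.trans (by linarith))
      have hyz : ‖y - z‖ ≤ R := by
        rw [← dist_eq_norm]
        linarith [dist_triangle_right y z x, Metric.mem_ball.mp hy, Metric.mem_ball.mp hz]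
      have hpow : (R / n) ^ (γ - j₀ - (α - j₀)) ≤ R ^ 2 * (n : ℝ) ^ (α - γ) := by
        rw [← neg_sub γ α]
        exact div_rpow_le_sq_mul_rpow hn (by linarith) (by linarith) (by linarith)
      have hmain := hψ.norm_smearError_iteratedFDeriv_sub_le hρK hδ hδR hfk hf hσ
        (by linarith) hj₀k hτ (by linarith [Nat.lt_floor_add_one α]) (by linarith) hyz
      rw [hkγ] at hmain
      calc ‖smearError ψ (iteratedFDeriv ℝ j₀ f) y - smearError ψ (iteratedFDeriv ℝ j₀ f) z‖
          ≤ (1 + K) * ((1 + K) * M) * ρ z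
            * (‖y - z‖ ^ (α - j₀) * (R / n) ^ (γ - j₀ - (α - j₀))) := hmain
        _ ≤ (1 + K) * ((1 + K) * M) * ((1 + K) * ρ x)
            * (‖y - z‖ ^ (α - j₀) * (R ^ 2 * (n : ℝ) ^ (α - γ))) := by
            gcongr
            linarith
        _ = _ := by ring
  rw [ENNReal.inv_mul_le_iff (by simpa using hρx) ENNReal.ofReal_ne_top]
  refine hball.trans (le_of_eq ?_)
  rw [← ENNReal.ofReal_toReal hf, ← hM, ← ENNReal.ofReal_mul (by positivity),
    ← ENNReal.ofReal_mul hρx.le]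
  congr 1
  ring
end
end

section
/- Let ρ be a polynomial weight on ℝ^d, 𝔹 a real Banach space, and 0 ≤ α ≤ γ ≤ 2. Then there is a constant C = C(d, α, γ, φ, ρ) > 0 such that for every f : ℝ^d → 𝔹 with ‖f‖_{C^α_ρ} < ∞ and every integer n ≥ 1, the mollification f_n := f * φ_n satisfies ‖f_n‖_{C^γ_ρ} ≤ C·n^{γ−α}·‖f‖_{C^α_ρ}. -/
open scoped ENNReal

noncomputable section

open MeasureTheory

section ScalarKernel

theorem integrable_smul_comp_sub {E F : Type*} [NormedAddCommGroup E] [MeasurableSpace E]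
    [BorelSpace E] {μ : Measure E} [IsFiniteMeasureOnCompacts μ] [NormedAddCommGroup F]
    [NormedSpace ℝ F] {ψ : E → ℝ} (hψ : Continuous ψ) (hc : HasCompactSupport ψ)
    {f : E → F} (hf : Continuous f) (x : E) : Integrable (fun y ↦ ψ y • f (x - y)) μ :=
  Continuous.integrable_of_hasCompactSupport (by fun_prop) hc.smul_right

variable {E F : Type*} [NormedAddCommGroup E] [NormedSpace ℝ E]
  [NormedAddCommGroup F] [NormedSpace ℝ F]

theorem contDiff_iteratedFDeriv_apply {m k : ℕ} {f : E → F} (hf : ContDiff ℝ (m + k : ℕ) f)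
    (w : Fin k → E) : ContDiff ℝ m (fun y ↦ iteratedFDeriv ℝ k f y w) := by
  have h : ContDiff ℝ m (iteratedFDeriv ℝ k f) := hf.iteratedFDeriv_right (by norm_cast)
  exact (ContinuousMultilinearMap.apply ℝ (fun _ : Fin k ↦ E) F w).contDiff.comp h

theorem hasCompactSupport_iteratedFDeriv_apply {ψ : E → F} (hc : HasCompactSupport ψ) {k : ℕ}
    (w : Fin k → E) : HasCompactSupport (fun y ↦ iteratedFDeriv ℝ k ψ y w) :=
  (hc.iteratedFDeriv k).comp_left (g := fun A : E [×k]→L[ℝ] F ↦ A w) rfl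

variable [FiniteDimensional ℝ E] [MeasurableSpace E] [BorelSpace E] {μ : Measure E}
  [μ.IsAddHaarMeasure]

theorem contDiff_integral_smul {n : ℕ∞} {ψ : E → ℝ} (hψ : ContDiff ℝ n ψ)
    (hc : HasCompactSupport ψ) {f : E → F} (hf : Continuous f) :
    ContDiff ℝ n (fun x ↦ ∫ y, ψ y • f (x - y) ∂μ) :=
  hc.contDiff_convolution_left (ContinuousLinearMap.lsmul ℝ ℝ) hψ hf.locallyIntegrable

/-- Differentiating a convolution by differentiating the kernel. -/
theorem fderiv_integral_smul_left {ψ : E → ℝ} (hψ : ContDiff ℝ 1 ψ) (hc : HasCompactSupport ψ)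
    {f : E → F} (hf : Continuous f) (x v : E) :
    fderiv ℝ (fun x ↦ ∫ y, ψ y • f (x - y) ∂μ) x v = ∫ y, fderiv ℝ ψ y v • f (x - y) ∂μ := by
  have h := hc.hasFDerivAt_convolution_left (μ := μ) (ContinuousLinearMap.lsmul ℝ ℝ) hψ
    (hf.locallyIntegrable (μ := μ)) x
  have h' : HasFDerivAt (fun x ↦ ∫ y, ψ y • f (x - y) ∂μ) _ x := h
  rw [h'.fderiv, convolution_def, ContinuousLinearMap.integral_apply]
  · rfl
  · have hD : Continuous (fderiv ℝ ψ) := hψ.continuous_fderiv one_ne_zero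
    have : HasCompactSupport (fderiv ℝ ψ) := hc.fderiv ℝ
    exact this.convolutionExists_left
      ((ContinuousLinearMap.lsmul ℝ ℝ : ℝ →L[ℝ] F →L[ℝ] F).precompL E)
      hD hf.locallyIntegrable x

/-- Moving a derivative from the kernel to the convolved function. -/
theorem integral_fderiv_smul_comp_sub {ψ : E → ℝ} (hψ : ContDiff ℝ 1 ψ)
    (hc : HasCompactSupport ψ) {f : E → F} (hf : ContDiff ℝ 1 f) (x v : E) :
    ∫ y, fderiv ℝ ψ y v • f (x - y) ∂μ = ∫ y, ψ y • fderiv ℝ f (x - y) v ∂μ := by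
  have hDψ : Continuous (fun y ↦ fderiv ℝ ψ y v) :=
    (hψ.continuous_fderiv one_ne_zero).clm_apply continuous_const
  have hDf : Continuous (fun y ↦ fderiv ℝ f y v) :=
    (hf.continuous_fderiv one_ne_zero).clm_apply continuous_const
  have hder : ∀ y, fderiv ℝ (fun y ↦ f (x - y)) y v = - fderiv ℝ f (x - y) v := by
    intro y
    have h := ((hf.differentiable one_ne_zero) (x - y)).hasFDerivAt.comp y
      ((hasFDerivAt_id y).const_sub x)
    have h' : HasFDerivAt (fun y ↦ f (x - y)) _ y := h
    rw [h'.fderiv]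
    simp
  have key := integral_smul_fderiv_eq_neg_fderiv_smul_of_integrable (μ := μ) (𝕜 := ℝ) (f := ψ)
    (g := fun y ↦ f (x - y)) (v := v)
    (integrable_smul_comp_sub hDψ (hc.fderiv_apply ℝ v) hf.continuous x)
    (by
      simp only [hder, smul_neg]
      exact (integrable_smul_comp_sub hψ.continuous hc hDf x).neg)
    (integrable_smul_comp_sub hψ.continuous hc hf.continuous x)
    (fun y _ ↦ hψ.differentiable one_ne_zero y)
    (fun y _ ↦ ((hf.differentiable one_ne_zero).comp (differentiable_const x |>.sub
      differentiable_id)) y)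
  simp only [hder, smul_neg, integral_neg, neg_inj] at key
  exact key.symm

theorem iteratedFDeriv_integral_smul_right {ψ : E → ℝ} (hψ : ContDiff ℝ (⊤ : ℕ∞) ψ)
    (hc : HasCompactSupport ψ) {f : E → F} {k : ℕ} (hf : ContDiff ℝ k f) (x : E)
    (v : Fin k → E) :
    iteratedFDeriv ℝ k (fun x ↦ ∫ y, ψ y • f (x - y) ∂μ) x v =
      ∫ y, ψ y • iteratedFDeriv ℝ k f (x - y) v ∂μ := by
  induction k generalizing x with
  | zero => simp
  | succ k ih =>
    have hG := contDiff_integral_smul (μ := μ) hψ hc hf.continuous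
    have hfk : ContDiff ℝ (1 + k : ℕ) f := by rwa [add_comm]
    rw [DifferentiableAt.iteratedFDeriv_succ_apply_left'
      (hG.differentiable_iteratedFDeriv (by exact_mod_cast ENat.natCast_lt_top k) x)]
    simp_rw [ih (hf.of_le (by norm_cast; omega))]
    have h1 := contDiff_iteratedFDeriv_apply hfk (Fin.tail v)
    rw [fderiv_integral_smul_left (hψ.of_le (by exact_mod_cast le_top)) hc h1.continuous,
      integral_fderiv_smul_comp_sub (f := fun y ↦ iteratedFDeriv ℝ k f y (Fin.tail v))
        (hψ.of_le (by exact_mod_cast le_top)) hc (by exact_mod_cast h1)]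
    congr! 3 with y
    rw [DifferentiableAt.iteratedFDeriv_succ_apply_left'
      (hf.differentiable_iteratedFDeriv (by exact_mod_cast Nat.lt_succ_self k) _)]

/-- The derivatives of a convolution of order `k + m`, with `k` derivatives falling on the
function and `m` on the kernel. -/
theorem exists_iteratedFDeriv_integral_smul {ψ : E → ℝ} (hψ : ContDiff ℝ (⊤ : ℕ∞) ψ)
    (hc : HasCompactSupport ψ) {f : E → F} {k : ℕ} (hf : ContDiff ℝ k f) (m : ℕ)
    (v : Fin (k + m) → E) :
    ∃ (w : Fin m → E) (u : Fin k → E), (∏ i, ‖w i‖) * ∏ i, ‖u i‖ = ∏ i, ‖v i‖ ∧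
      ∀ x, iteratedFDeriv ℝ (k + m) (fun x ↦ ∫ y, ψ y • f (x - y) ∂μ) x v =
        ∫ y, iteratedFDeriv ℝ m ψ y w • iteratedFDeriv ℝ k f (x - y) u ∂μ := by
  induction m with
  | zero =>
    refine ⟨Fin.elim0, v, by simp, fun x ↦ ?_⟩
    simpa using iteratedFDeriv_integral_smul_right hψ hc hf x v
  | succ m ih =>
    change Fin (k + m + 1) → E at v
    obtain ⟨w, u, hwu, h⟩ := ih (Fin.tail v)
    refine ⟨Fin.cons (v 0) w, u, ?_, fun x ↦ ?_⟩
    · have h0 : ∏ i, ‖v i‖ = ‖v 0‖ * ∏ i, ‖Fin.tail v i‖ := Fin.prod_univ_succ _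
      refine Eq.trans ?_ h0.symm
      rw [← hwu, Fin.prod_univ_succ]
      simp [mul_assoc]
    · have hG := contDiff_integral_smul (μ := μ) hψ hc hf.continuous
      have hD := DifferentiableAt.iteratedFDeriv_succ_apply_left' (m := v)
        (hG.differentiable_iteratedFDeriv (m := k + m)
          (by exact_mod_cast ENat.natCast_lt_top (k + m)) x)
      refine hD.trans ?_
      simp_rw [h]
      have hu : Continuous (fun y ↦ iteratedFDeriv ℝ k f y u) :=
        (contDiff_iteratedFDeriv_apply (m := 0) (by simpa using hf) u).continuous
      have hw : ContDiff ℝ 1 (fun y ↦ iteratedFDeriv ℝ m ψ y w) := by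
        exact_mod_cast contDiff_iteratedFDeriv_apply (m := 1) (f := ψ) (k := m)
          (hψ.of_le (by exact_mod_cast le_top)) w
      rw [fderiv_integral_smul_left hw (hasCompactSupport_iteratedFDeriv_apply hc w) hu]
      congr! 3 with y
      rw [DifferentiableAt.iteratedFDeriv_succ_apply_left'
        (hψ.differentiable_iteratedFDeriv (by exact_mod_cast ENat.natCast_lt_top m) _)]
      simp

theorem integral_iteratedFDeriv_succ_apply {ψ : E → ℝ} (hψ : ContDiff ℝ (⊤ : ℕ∞) ψ)
    (hc : HasCompactSupport ψ) {m : ℕ} (w : Fin (m + 1) → E) :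
    ∫ y, iteratedFDeriv ℝ (m + 1) ψ y w ∂μ = 0 := by
  have hw : ContDiff ℝ 1 (fun y ↦ iteratedFDeriv ℝ m ψ y (Fin.tail w)) := by
    exact_mod_cast contDiff_iteratedFDeriv_apply (m := 1) (f := ψ) (k := m)
      (hψ.of_le (by exact_mod_cast le_top)) (Fin.tail w)
  have h := integral_fderiv_smul_comp_sub (μ := μ) hw (hasCompactSupport_iteratedFDeriv_apply hc _)
    (contDiff_const (c := (1 : ℝ))) 0 (w 0)
  have hD : ∀ y, iteratedFDeriv ℝ (m + 1) ψ y w =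
      fderiv ℝ (fun y ↦ iteratedFDeriv ℝ m ψ y (Fin.tail w)) y (w 0) := fun y ↦
    DifferentiableAt.iteratedFDeriv_succ_apply_left'
      (hψ.differentiable_iteratedFDeriv (by exact_mod_cast ENat.natCast_lt_top m) _)
  simpa [hD] using h

end ScalarKernel

section Weight

theorem IsPolyWeight.exists_le_mul {E : Type*} [NormedAddCommGroup E] {ρ : E → ℝ}
    (hρ : IsPolyWeight ρ) {R : ℝ} (hR : 0 ≤ R) :
    ∃ D, 1 ≤ D ∧ ∀ x z, ‖z - x‖ ≤ R → ρ z ≤ D * ρ x := by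
  obtain ⟨-, r, c, C, hc, hcC, h⟩ := hρ
  have hC : 0 < C := hc.trans_le hcC
  have hpow : ∀ x z : E, ‖z - x‖ ≤ R →
      (1 + ‖z‖) ^ r ≤ (1 + R) ^ |r| * (1 + ‖x‖) ^ r := by
    intro x z hxz
    have hx := norm_nonneg x
    have hz := norm_nonneg z
    have h1 : ‖z‖ ≤ ‖x‖ + R := by
      have := norm_le_norm_add_norm_sub' z x
      linarith
    have h2 : ‖x‖ ≤ ‖z‖ + R := by
      have := norm_le_norm_add_norm_sub z x
      linarith
    rcases le_total 0 r with hr | hr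
    · rw [abs_of_nonneg hr, ← Real.mul_rpow (by positivity) (by positivity)]
      exact Real.rpow_le_rpow (by positivity) (by nlinarith) hr
    · rw [abs_of_nonpos hr, Real.rpow_neg (by positivity), ← div_eq_inv_mul,
        le_div_iff₀ (by positivity), ← Real.mul_rpow (by positivity) (by positivity)]
      exact Real.rpow_le_rpow_of_nonpos (by positivity) (by nlinarith) hr
  have hone : 1 ≤ (1 + R) ^ |r| := Real.one_le_rpow (by linarith) (abs_nonneg r)
  refine ⟨C / c * (1 + R) ^ |r|, ?_, fun x z hxz ↦ ?_⟩
  · exact one_le_mul_of_one_le_of_one_le ((one_le_div hc).2 hcC) hone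
  · calc ρ z ≤ C * (1 + ‖z‖) ^ r := (h z).2
      _ ≤ C * ((1 + R) ^ |r| * (1 + ‖x‖) ^ r) := by gcongr; exact hpow x z hxz
      _ = C / c * (1 + R) ^ |r| * (c * (1 + ‖x‖) ^ r) := by field_simp
      _ ≤ C / c * (1 + R) ^ |r| * ρ x := by gcongr; exact (h x).1

end Weight

section WeightedNorm

variable {d : ℕ} {𝔹 : Type*} [NormedAddCommGroup 𝔹] [NormedSpace ℝ 𝔹]
  {ρ : EuclideanSpace ℝ (Fin d) → ℝ} {k : ℕ} {σ : ℝ} {f : EuclideanSpace ℝ (Fin d) → 𝔹}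

theorem ballCNorm_le_of_wNorm (hρ : ∀ x, 0 < ρ x) (hf : wNorm ρ k σ f ≠ ⊤)
    (x : EuclideanSpace ℝ (Fin d)) :
    ballCNorm k σ f x ≤ ENNReal.ofReal (ρ x * (wNorm ρ k σ f).toReal) := by
  have h : (ENNReal.ofReal (ρ x))⁻¹ * ballCNorm k σ f x ≤ wNorm ρ k σ f :=
    le_iSup (fun x ↦ (ENNReal.ofReal (ρ x))⁻¹ * ballCNorm k σ f x) x
  rw [ENNReal.ofReal_mul (hρ x).le, ENNReal.ofReal_toReal hf]
  rwa [ENNReal.inv_mul_le_iff (by simpa using hρ x) ENNReal.ofReal_ne_top] at h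

theorem norm_iteratedFDeriv_le_of_wNorm (hρ : ∀ x, 0 < ρ x) (hf : wNorm ρ k σ f ≠ ⊤) {j : ℕ}
    (hj : j ≤ k) (x : EuclideanSpace ℝ (Fin d)) :
    ‖iteratedFDeriv ℝ j f x‖ ≤ ρ x * (wNorm ρ k σ f).toReal := by
  have h : ENNReal.ofReal ‖iteratedFDeriv ℝ j f x‖ ≤ ballCNorm k σ f x := by
    rw [ofReal_norm]
    calc ‖iteratedFDeriv ℝ j f x‖ₑ ≤ ballSup (iteratedFDeriv ℝ j f) x :=
          le_iSup₂ (f := fun y (_ : y ∈ Metric.ball x 1) ↦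
            (‖iteratedFDeriv ℝ j f y‖₊ : ℝ≥0∞)) x (Metric.mem_ball_self one_pos)
      _ ≤ ∑ j ∈ Finset.range (k + 1), ballSup (iteratedFDeriv ℝ j f) x :=
          Finset.single_le_sum (f := fun j ↦ ballSup (iteratedFDeriv ℝ j f) x)
            (fun _ _ ↦ zero_le) (Finset.mem_range.2 (by omega))
      _ ≤ ballCNorm k σ f x := le_self_add
  exact (ENNReal.ofReal_le_ofReal_iff (mul_nonneg (hρ x).le ENNReal.toReal_nonneg)).1
    (h.trans (ballCNorm_le_of_wNorm hρ hf x))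

theorem norm_iteratedFDeriv_sub_le_of_wNorm (hρ : ∀ x, 0 < ρ x) (hf : wNorm ρ k σ f ≠ ⊤)
    (hσ : 0 < σ) {x y : EuclideanSpace ℝ (Fin d)} (hxy : ‖y - x‖ < 1) :
    ‖iteratedFDeriv ℝ k f y - iteratedFDeriv ℝ k f x‖ ≤
      ρ x * (wNorm ρ k σ f).toReal * ‖y - x‖ ^ σ := by
  have hM : 0 ≤ ρ x * (wNorm ρ k σ f).toReal := mul_nonneg (hρ x).le ENNReal.toReal_nonneg
  rcases eq_or_ne y x with rfl | hne
  · simpa using mul_nonneg hM (Real.rpow_nonneg le_rfl σ)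
  have h : ENNReal.ofReal (‖iteratedFDeriv ℝ k f y - iteratedFDeriv ℝ k f x‖ / ‖y - x‖ ^ σ) ≤
      ballCNorm k σ f x := by
    refine le_trans ?_ (le_add_self (a := if 0 < σ then _ else 0))
    rw [if_pos hσ]
    refine le_trans ?_ (le_iSup₂ y (mem_ball_iff_norm.2 hxy))
    refine le_trans ?_ (le_iSup₂ x (Metric.mem_ball_self one_pos))
    exact le_iSup (fun _ : y ≠ x ↦ ENNReal.ofReal
      (‖iteratedFDeriv ℝ k f y - iteratedFDeriv ℝ k f x‖ / ‖y - x‖ ^ σ)) hne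
  have h' := (ENNReal.ofReal_le_ofReal_iff hM).1 (h.trans (ballCNorm_le_of_wNorm hρ hf x))
  have : 0 < ‖y - x‖ := norm_pos_iff.2 (sub_ne_zero.2 hne)
  rwa [div_le_iff₀ (by positivity)] at h'

/-- The Hölder estimate at unit scale extends to larger scales, with constant depending on the
oscillation of the weight. -/
theorem norm_iteratedFDeriv_sub_le_of_weight_le (hρ : ∀ x, 0 < ρ x) (hf : wNorm ρ k σ f ≠ ⊤)
    (hσ : 0 ≤ σ) {D R : ℝ} (hD : ∀ x z, ‖z - x‖ ≤ R → ρ z ≤ D * ρ x) (hD1 : 1 ≤ D)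
    {x y : EuclideanSpace ℝ (Fin d)} (hxy : ‖y - x‖ ≤ R) :
    ‖iteratedFDeriv ℝ k f y - iteratedFDeriv ℝ k f x‖ ≤
      (1 + D) * (ρ x * (wNorm ρ k σ f).toReal) * ‖y - x‖ ^ σ := by
  have hM : 0 ≤ ρ x * (wNorm ρ k σ f).toReal := mul_nonneg (hρ x).le ENNReal.toReal_nonneg
  have hsup : ‖iteratedFDeriv ℝ k f y - iteratedFDeriv ℝ k f x‖ ≤
      (1 + D) * (ρ x * (wNorm ρ k σ f).toReal) := by
    have hy := norm_iteratedFDeriv_le_of_wNorm hρ hf le_rfl y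
    have hx := norm_iteratedFDeriv_le_of_wNorm hρ hf le_rfl x
    have h := mul_le_mul_of_nonneg_right (hD x y hxy) (wNorm ρ k σ f).toReal_nonneg
    have := norm_sub_le (iteratedFDeriv ℝ k f y) (iteratedFDeriv ℝ k f x)
    linarith
  rcases hσ.eq_or_lt with rfl | hσ
  · simpa using hsup
  rcases lt_or_ge ‖y - x‖ 1 with h1 | h1
  · refine (norm_iteratedFDeriv_sub_le_of_wNorm hρ hf hσ h1).trans ?_
    have : 0 ≤ D * (ρ x * (wNorm ρ k σ f).toReal) := mul_nonneg (by linarith) hM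
    refine mul_le_mul_of_nonneg_right ?_ (by positivity)
    linarith
  · exact hsup.trans (le_mul_of_one_le_right (mul_nonneg (by linarith) hM)
      (Real.one_le_rpow h1 hσ.le))

end WeightedNorm

section Mollifier

variable {d : ℕ} {𝔹 : Type*} [NormedAddCommGroup 𝔹] [NormedSpace ℝ 𝔹]
  {φ : EuclideanSpace ℝ (Fin d) → ℝ}

theorem contDiff_rescale (hφ : ContDiff ℝ (⊤ : ℕ∞) φ) (n : ℕ) :
    ContDiff ℝ (⊤ : ℕ∞) (fun y ↦ (n : ℝ) ^ d * φ ((n : ℝ) • y)) := by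
  fun_prop

theorem hasCompactSupport_rescale (hc : HasCompactSupport φ) {n : ℕ} (hn : 1 ≤ n) :
    HasCompactSupport (fun y ↦ (n : ℝ) ^ d * φ ((n : ℝ) • y)) :=
  (hc.comp_smul (c := (n : ℝ)) (by positivity)).mul_left

/-- Scaling bound for integrals against the derivatives of `y ↦ n ^ d * φ (n • y)`, which are
supported in a ball of radius `R / n`. -/
theorem exists_norm_integral_iteratedFDeriv_rescale_le (𝔹 : Type*) [NormedAddCommGroup 𝔹]
    [NormedSpace ℝ 𝔹] (hφ : ContDiff ℝ (⊤ : ℕ∞) φ) (hc : HasCompactSupport φ) :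
    ∃ R, 2 ≤ R ∧ ∀ m : ℕ, ∃ K, 0 < K ∧ ∀ n : ℕ, 1 ≤ n →
      ∀ (w : Fin m → EuclideanSpace ℝ (Fin d)) (H : EuclideanSpace ℝ (Fin d) → 𝔹) (T : ℝ),
        (∀ y, ‖y‖ ≤ R / n → ‖H y‖ ≤ T) →
        ‖∫ y, iteratedFDeriv ℝ m (fun y ↦ (n : ℝ) ^ d * φ ((n : ℝ) • y)) y w • H y‖ ≤
          K * (n : ℝ) ^ m * T * ∏ i, ‖w i‖ := by
  obtain ⟨R₀, hR₀⟩ := hc.isCompact.isBounded.subset_closedBall 0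
  set R := max R₀ 2
  have hR : 0 < R := lt_max_of_lt_right two_pos
  refine ⟨R, le_max_right _ _, fun m ↦ ?_⟩
  obtain ⟨B, hB⟩ := (hc.iteratedFDeriv m (𝕜 := ℝ)).exists_bound_of_continuous
    (hφ.continuous_iteratedFDeriv (by exact_mod_cast le_top))
  have hB0 : 0 ≤ B := (norm_nonneg _).trans (hB 0)
  set V := volume.real (Metric.ball (0 : EuclideanSpace ℝ (Fin d)) 1)
  refine ⟨B * (R ^ d * V) + 1, by positivity, fun n hn w H T hH ↦ ?_⟩
  have hn0 : (0 : ℝ) < n := by exact_mod_cast hn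
  have hT : 0 ≤ T := (norm_nonneg _).trans (hH 0 (by simpa using by positivity))
  have hderiv : ∀ y, iteratedFDeriv ℝ m (fun y ↦ (n : ℝ) ^ d * φ ((n : ℝ) • y)) y =
      ((n : ℝ) ^ d * (n : ℝ) ^ m) • iteratedFDeriv ℝ m φ ((n : ℝ) • y) := by
    intro y
    have hφm : ContDiff ℝ m φ := hφ.of_le (by exact_mod_cast le_top)
    have hφn : ContDiff ℝ m (fun y ↦ φ ((n : ℝ) • y)) := by fun_prop
    have h := iteratedFDeriv_const_smul_apply (a := (n : ℝ) ^ d) (hφn.contDiffAt (x := y))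
    have h' := congrFun (iteratedFDeriv_comp_const_smul (n : ℝ) hφm) y
    rw [h', smul_smul] at h
    exact h
  set W := ∏ i, ‖w i‖
  have hW : 0 ≤ W := by positivity
  have hzero : ∀ y ∉ Metric.closedBall (0 : EuclideanSpace ℝ (Fin d)) (R / n),
      iteratedFDeriv ℝ m (fun y ↦ (n : ℝ) ^ d * φ ((n : ℝ) • y)) y w • H y = 0 := by
    intro y hy
    have : iteratedFDeriv ℝ m φ ((n : ℝ) • y) = 0 := by
      by_contra hne
      have h := hR₀ (support_iteratedFDeriv_subset m hne)
      rw [mem_closedBall_zero_iff, norm_smul, Real.norm_natCast] at h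
      rw [mem_closedBall_zero_iff, not_le, div_lt_iff₀ hn0] at hy
      linarith [le_max_left R₀ 2, mul_comm ‖y‖ n]
    simp [hderiv, this]
  rw [← setIntegral_eq_integral_of_forall_compl_eq_zero hzero]
  have hbound : ∀ y ∈ Metric.closedBall (0 : EuclideanSpace ℝ (Fin d)) (R / n),
      ‖iteratedFDeriv ℝ m (fun y ↦ (n : ℝ) ^ d * φ ((n : ℝ) • y)) y w • H y‖ ≤
        (n : ℝ) ^ d * (n : ℝ) ^ m * (B * W) * T := by
    intro y hy
    rw [norm_smul, hderiv, smul_apply, norm_smul, Real.norm_of_nonneg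
      (by positivity : (0 : ℝ) ≤ (n : ℝ) ^ d * (n : ℝ) ^ m)]
    have h1 := hH y (mem_closedBall_zero_iff.1 hy)
    have h2 := (iteratedFDeriv ℝ m φ ((n : ℝ) • y)).le_of_opNorm_le (hB _) w
    gcongr
  refine (norm_setIntegral_le_of_norm_le_const (measure_closedBall_lt_top) hbound).trans ?_
  rw [Measure.addHaar_real_closedBall _ _ (by positivity), finrank_euclideanSpace_fin]
  have hX : 0 ≤ (n : ℝ) ^ m * T * W := by positivity
  calc (n : ℝ) ^ d * (n : ℝ) ^ m * (B * W) * T * ((R / n) ^ d * V)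
      = B * (R ^ d * V) * ((n : ℝ) ^ m * T * W) := by rw [div_pow]; field_simp
    _ ≤ (B * (R ^ d * V) + 1) * ((n : ℝ) ^ m * T * W) := by gcongr; linarith
    _ = _ := by ring

theorem le_mul_rpow_of_le_of_le {Z P s β σ : ℝ} (hP : 0 ≤ P) (hs : 0 < s) (hβσ : β ≤ σ)
    (hσ : σ ≤ 1) (h₁ : Z ≤ P * s ^ β) (h₂ : Z ≤ P * s) : Z ≤ P * s ^ σ := by
  rcases le_total 1 s with h | h
  · exact h₁.trans (by gcongr)
  · refine h₂.trans (mul_le_mul_of_nonneg_left ?_ hP)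
    simpa using Real.rpow_le_rpow_of_exponent_ge hs h hσ

variable [CompleteSpace 𝔹] {ρ : EuclideanSpace ℝ (Fin d) → ℝ}

theorem contDiff_mollify (hφ : ContDiff ℝ (⊤ : ℕ∞) φ) (hc : HasCompactSupport φ) {n : ℕ}
    (hn : 1 ≤ n) {f : EuclideanSpace ℝ (Fin d) → 𝔹} (hf : Continuous f) :
    ContDiff ℝ (⊤ : ℕ∞) (mollify φ n f) :=
  contDiff_integral_smul (contDiff_rescale hφ n) (hasCompactSupport_rescale hc hn) hf

/-- Mollification is bounded, uniformly in `n`, on derivatives up to the regularity of `f`. -/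
theorem exists_norm_iteratedFDeriv_mollify_le (hρ : IsPolyWeight ρ)
    (hφ : ContDiff ℝ (⊤ : ℕ∞) φ) (hc : HasCompactSupport φ) (a : ℕ) (A : ℝ) :
    ∃ C, 0 < C ∧ ∀ f : EuclideanSpace ℝ (Fin d) → 𝔹, ContDiff ℝ a f → wNorm ρ a A f ≠ ⊤ →
      ∀ n : ℕ, 1 ≤ n → ∀ j ≤ a, ∀ x,
        ‖iteratedFDeriv ℝ j (mollify φ n f) x‖ ≤ C * (ρ x * (wNorm ρ a A f).toReal) := by
  obtain ⟨R, hR, hK⟩ := exists_norm_integral_iteratedFDeriv_rescale_le 𝔹 hφ hc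
  obtain ⟨K, hK0, hK⟩ := hK 0
  obtain ⟨D, hD1, hD⟩ := hρ.exists_le_mul (R := R) (by linarith)
  refine ⟨K * D, by positivity, fun f hf hfin n hn j hj x ↦ ?_⟩
  set M := (wNorm ρ a A f).toReal
  have hM : 0 ≤ M := ENNReal.toReal_nonneg
  have hρx := hρ.1 x
  have hn1 : (1 : ℝ) ≤ n := by exact_mod_cast hn
  refine ContinuousMultilinearMap.opNorm_le_bound (by positivity) fun v ↦ ?_
  have h := iteratedFDeriv_integral_smul_right (μ := volume) (contDiff_rescale hφ n)
    (hasCompactSupport_rescale hc hn) (hf.of_le (by exact_mod_cast hj)) x v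
  have hle := hK n hn Fin.elim0 (fun y ↦ iteratedFDeriv ℝ j f (x - y) v)
    (D * (ρ x * M) * ∏ i, ‖v i‖) (fun y hy ↦ by
      refine ContinuousMultilinearMap.le_of_opNorm_le ?_ v
      refine (norm_iteratedFDeriv_le_of_wNorm hρ.1 hfin hj _).trans ?_
      rw [← mul_assoc]
      refine mul_le_mul_of_nonneg_right (hD _ _ ?_) hM
      simpa using hy.trans (div_le_self (by linarith) hn1))
  simp only [iteratedFDeriv_zero_apply] at hle
  rw [← h] at hle
  refine hle.trans_eq ?_
  simp
  ring

/-- Derivatives of the mollification beyond the regularity `a + A` of `f` grow like a power of `n`;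
the gain `n ^ (-A)` comes from the vanishing mean of the derivatives of the kernel. -/
theorem exists_norm_iteratedFDeriv_add_mollify_le (hρ : IsPolyWeight ρ)
    (hφ : ContDiff ℝ (⊤ : ℕ∞) φ) (hc : HasCompactSupport φ) (a : ℕ) {A : ℝ} (hA : 0 ≤ A)
    (m : ℕ) :
    ∃ C, 0 < C ∧ ∀ f : EuclideanSpace ℝ (Fin d) → 𝔹, ContDiff ℝ a f → wNorm ρ a A f ≠ ⊤ →
      ∀ n : ℕ, 1 ≤ n → ∀ x,
        ‖iteratedFDeriv ℝ (a + (m + 1)) (mollify φ n f) x‖ ≤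
          C * (n : ℝ) ^ ((m + 1 : ℕ) - A) * (ρ x * (wNorm ρ a A f).toReal) := by
  obtain ⟨R, hR, hK⟩ := exists_norm_integral_iteratedFDeriv_rescale_le 𝔹 hφ hc
  obtain ⟨K, hK0, hK⟩ := hK (m + 1)
  obtain ⟨D, hD1, hD⟩ := hρ.exists_le_mul (R := R) (by linarith)
  refine ⟨K * (1 + D) * R ^ A, by positivity, fun f hf hfin n hn x ↦ ?_⟩
  set M := (wNorm ρ a A f).toReal
  have hM : 0 ≤ M := ENNReal.toReal_nonneg
  have hρx := hρ.1 x
  have hn1 : (1 : ℝ) ≤ n := by exact_mod_cast hn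
  have hψ := contDiff_rescale hφ n
  have hψc := hasCompactSupport_rescale hc hn
  refine ContinuousMultilinearMap.opNorm_le_bound (by positivity) fun v ↦ ?_
  obtain ⟨w, u, hwu, h⟩ := exists_iteratedFDeriv_integral_smul (μ := volume) hψ hψc hf (m + 1) v
  have hle := hK n hn w (fun y ↦ iteratedFDeriv ℝ a f (x - y) u - iteratedFDeriv ℝ a f x u)
    ((1 + D) * (ρ x * M) * (R / n) ^ A * ∏ i, ‖u i‖) (fun y hy ↦ by
      have hyR : ‖x - y - x‖ ≤ R := by
        simpa using hy.trans (div_le_self (by linarith) hn1)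
      rw [← sub_apply]
      refine ContinuousMultilinearMap.le_of_opNorm_le ?_ u
      refine (norm_iteratedFDeriv_sub_le_of_weight_le hρ.1 hfin hA hD hD1 hyR).trans ?_
      gcongr
      simpa using hy)
  have hw : Continuous
      (fun y ↦ iteratedFDeriv ℝ (m + 1) (fun y ↦ (n : ℝ) ^ d * φ ((n : ℝ) • y)) y w) :=
    (contDiff_iteratedFDeriv_apply (m := 0) (hψ.of_le (by exact_mod_cast le_top)) w).continuous
  have hwc := hasCompactSupport_iteratedFDeriv_apply hψc w
  have hu : Continuous (fun y ↦ iteratedFDeriv ℝ a f y u) :=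
    (contDiff_iteratedFDeriv_apply (m := 0) (by simpa using hf) u).continuous
  simp only [smul_sub] at hle
  rw [integral_sub (integrable_smul_comp_sub hw hwc hu x)
    ((hw.integrable_of_hasCompactSupport hwc).smul_const _), integral_smul_const,
    integral_iteratedFDeriv_succ_apply hψ hψc w, zero_smul, sub_zero, ← h x] at hle
  refine hle.trans_eq ?_
  rw [← hwu, Real.rpow_sub (by linarith), Real.rpow_natCast,
    Real.div_rpow (by linarith) (by linarith)]
  ring

/-- Mollification preserves the Hölder estimate of the top derivative, uniformly in `n`. -/
theorem exists_norm_iteratedFDeriv_mollify_sub_le (hρ : IsPolyWeight ρ)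
    (hφ : ContDiff ℝ (⊤ : ℕ∞) φ) (hc : HasCompactSupport φ) (a : ℕ) {A : ℝ} (hA : 0 ≤ A) :
    ∃ C, 0 < C ∧ ∀ f : EuclideanSpace ℝ (Fin d) → 𝔹, ContDiff ℝ a f → wNorm ρ a A f ≠ ⊤ →
      ∀ n : ℕ, 1 ≤ n → ∀ x y, ‖y - x‖ ≤ 2 →
        ‖iteratedFDeriv ℝ a (mollify φ n f) y - iteratedFDeriv ℝ a (mollify φ n f) x‖ ≤
          C * (ρ x * (wNorm ρ a A f).toReal) * ‖y - x‖ ^ A := by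
  obtain ⟨R, hR, hK⟩ := exists_norm_integral_iteratedFDeriv_rescale_le 𝔹 hφ hc
  obtain ⟨K, hK0, hK⟩ := hK 0
  obtain ⟨D, hD1, hD⟩ := hρ.exists_le_mul (R := R) (by linarith)
  refine ⟨K * (1 + D) * D, by positivity, fun f hf hfin n hn x y hxy ↦ ?_⟩
  set M := (wNorm ρ a A f).toReal
  have hM : 0 ≤ M := ENNReal.toReal_nonneg
  have hρx := hρ.1 x
  have hn1 : (1 : ℝ) ≤ n := by exact_mod_cast hn
  have hψ := contDiff_rescale hφ n
  have hψc := hasCompactSupport_rescale hc hn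
  refine ContinuousMultilinearMap.opNorm_le_bound (by positivity) fun v ↦ ?_
  have hle := hK n hn Fin.elim0
    (fun z ↦ iteratedFDeriv ℝ a f (y - z) v - iteratedFDeriv ℝ a f (x - z) v)
    ((1 + D) * (D * ρ x * M) * ‖y - x‖ ^ A * ∏ i, ‖v i‖) (fun z hz ↦ by
      have hdiff : y - z - (x - z) = y - x := by abel
      rw [← sub_apply]
      refine ContinuousMultilinearMap.le_of_opNorm_le ?_ v
      refine (norm_iteratedFDeriv_sub_le_of_weight_le hρ.1 hfin hA hD hD1
        (by rw [hdiff]; linarith)).trans ?_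
      rw [hdiff]
      gcongr
      refine hD _ _ ?_
      simpa using hz.trans (div_le_self (by linarith) hn1))
  have hu : Continuous (fun y ↦ iteratedFDeriv ℝ a f y v) :=
    (contDiff_iteratedFDeriv_apply (m := 0) (by simpa using hf) v).continuous
  simp only [iteratedFDeriv_zero_apply, smul_sub] at hle
  rw [integral_sub (integrable_smul_comp_sub hψ.continuous hψc hu y)
    (integrable_smul_comp_sub hψ.continuous hψc hu x),
    ← iteratedFDeriv_integral_smul_right hψ hψc hf,
    ← iteratedFDeriv_integral_smul_right hψ hψc hf] at hle
  refine hle.trans_eq ?_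
  simp
  ring

/-- Hölder estimate for the derivatives of the mollification, by interpolation between increments
at scales above and below `1 / n`. -/
theorem exists_norm_iteratedFDeriv_mollify_sub_le_rpow (hρ : IsPolyWeight ρ)
    (hφ : ContDiff ℝ (⊤ : ℕ∞) φ) (hc : HasCompactSupport φ) (a : ℕ) {A : ℝ} (hA : 0 ≤ A)
    (m : ℕ) {σ : ℝ} (hσ0 : 0 ≤ σ) (hσ1 : σ ≤ 1) (hAσ : m = 0 → A ≤ σ) :
    ∃ C, 0 < C ∧ ∀ f : EuclideanSpace ℝ (Fin d) → 𝔹, ContDiff ℝ a f → wNorm ρ a A f ≠ ⊤ →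
      ∀ n : ℕ, 1 ≤ n → ∀ x, ∀ y ∈ Metric.ball x 1, ∀ y' ∈ Metric.ball x 1, y ≠ y' →
        ‖iteratedFDeriv ℝ (a + m) (mollify φ n f) y -
            iteratedFDeriv ℝ (a + m) (mollify φ n f) y'‖ ≤
          C * (n : ℝ) ^ (m + σ - A) * (ρ x * (wNorm ρ a A f).toReal) * ‖y - y'‖ ^ σ := by
  obtain ⟨D, hD1, hD⟩ := hρ.exists_le_mul (R := 1) zero_le_one
  obtain ⟨C₁, hC₁, h₁⟩ :=
    exists_norm_iteratedFDeriv_add_mollify_le (𝔹 := 𝔹) hρ hφ hc a hA m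
  obtain ⟨C₀, β, hC₀, hβ, h₀⟩ : ∃ C₀ β : ℝ, 0 < C₀ ∧ β ≤ σ ∧
      ∀ f : EuclideanSpace ℝ (Fin d) → 𝔹, ContDiff ℝ a f → wNorm ρ a A f ≠ ⊤ →
      ∀ n : ℕ, 1 ≤ n → ∀ x, ∀ y ∈ Metric.ball x 1, ∀ y' ∈ Metric.ball x 1, y ≠ y' →
        ‖iteratedFDeriv ℝ (a + m) (mollify φ n f) y -
            iteratedFDeriv ℝ (a + m) (mollify φ n f) y'‖ ≤
          C₀ * (n : ℝ) ^ (m - A) * (ρ x * (wNorm ρ a A f).toReal) * (n * ‖y - y'‖) ^ β := by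
    cases m with
    | zero =>
      obtain ⟨C, hC, h⟩ :=
        exists_norm_iteratedFDeriv_mollify_sub_le (𝔹 := 𝔹) hρ hφ hc a hA
      refine ⟨C * D, A, by positivity, hAσ rfl, fun f hf hfin n hn x y hy y' hy' _ ↦ ?_⟩
      have hn0 : (0 : ℝ) < n := by exact_mod_cast hn
      rw [mem_ball_iff_norm] at hy hy'
      have hyy' : ‖y - y'‖ ≤ 2 := by
        have := norm_sub_le (y - x) (y' - x)
        rw [sub_sub_sub_cancel_right] at this
        linarith
      refine (h f hf hfin n hn y' y hyy').trans ?_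
      rw [Real.mul_rpow hn0.le (norm_nonneg _), Nat.cast_zero, zero_sub, Real.rpow_neg hn0.le]
      have hw := hD x y' hy'.le
      have hM : 0 ≤ (wNorm ρ a A f).toReal := ENNReal.toReal_nonneg
      calc C * (ρ y' * (wNorm ρ a A f).toReal) * ‖y - y'‖ ^ A
          ≤ C * (D * ρ x * (wNorm ρ a A f).toReal) * ‖y - y'‖ ^ A := by gcongr
        _ = _ := by field_simp
    | succ m =>
      obtain ⟨C, hC, h⟩ :=
        exists_norm_iteratedFDeriv_add_mollify_le (𝔹 := 𝔹) hρ hφ hc a hA m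
      refine ⟨2 * (C * D), 0, by positivity, hσ0, fun f hf hfin n hn x y hy y' hy' _ ↦ ?_⟩
      rw [mem_ball_iff_norm] at hy hy'
      have hM : 0 ≤ (wNorm ρ a A f).toReal := ENNReal.toReal_nonneg
      have hz : ∀ z, ‖z - x‖ < 1 → ‖iteratedFDeriv ℝ (a + (m + 1)) (mollify φ n f) z‖ ≤
          C * (n : ℝ) ^ ((m + 1 : ℕ) - A) * (D * ρ x * (wNorm ρ a A f).toReal) := by
        intro z hz
        refine (h f hf hfin n hn z).trans ?_
        gcongr
        exact hD x z hz.le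
      rw [Real.rpow_zero]
      refine (norm_sub_le _ _).trans ?_
      linarith [hz y hy, hz y' hy']
  refine ⟨max C₀ (C₁ * D), lt_max_of_lt_left hC₀, fun f hf hfin n hn x y hy y' hy' hne ↦ ?_⟩
  have hn0 : (0 : ℝ) < n := by exact_mod_cast hn
  have hM : 0 ≤ (wNorm ρ a A f).toReal := ENNReal.toReal_nonneg
  have hρx := hρ.1 x
  have ht : 0 < ‖y - y'‖ := norm_pos_iff.2 (sub_ne_zero.2 hne)
  have hsmooth := contDiff_mollify hφ hc hn hf.continuous
  have hmean : ‖iteratedFDeriv ℝ (a + m) (mollify φ n f) y -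
      iteratedFDeriv ℝ (a + m) (mollify φ n f) y'‖ ≤
      C₁ * (n : ℝ) ^ ((m + 1 : ℕ) - A) * (D * ρ x * (wNorm ρ a A f).toReal) * ‖y - y'‖ := by
    refine (convex_ball x 1).norm_image_sub_le_of_norm_fderiv_le (𝕜 := ℝ)
      (fun z _ ↦ hsmooth.differentiable_iteratedFDeriv
        (by exact_mod_cast ENat.natCast_lt_top (a + m)) z) (fun z hz ↦ ?_) hy' hy
    rw [norm_fderiv_iteratedFDeriv]
    refine (h₁ f hf hfin n hn z).trans ?_
    gcongr
    exact hD x z (mem_ball_iff_norm.1 hz).le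
  have hP : 0 ≤ max C₀ (C₁ * D) * (n : ℝ) ^ (m - A) * (ρ x * (wNorm ρ a A f).toReal) := by
    positivity
  have key := le_mul_rpow_of_le_of_le hP (mul_pos hn0 ht) hβ hσ1
    ((h₀ f hf hfin n hn x y hy y' hy' hne).trans (by gcongr; exact le_max_left _ _))
    (hmean.trans (by
      have : (n : ℝ) ^ ((m + 1 : ℕ) - A) = (n : ℝ) ^ (m - A) * n := by
        rw [← Real.rpow_add_one hn0.ne']
        congr 1
        push_cast
        ring
      rw [this]
      calc _ = C₁ * D * (n : ℝ) ^ (m - A) * (ρ x * (wNorm ρ a A f).toReal) *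
            (n * ‖y - y'‖) := by ring
        _ ≤ _ := by gcongr; exact le_max_right _ _))
  refine key.trans_eq ?_
  have : (n : ℝ) ^ (m + σ - A) = (n : ℝ) ^ (m - A) * (n : ℝ) ^ σ := by
    rw [← Real.rpow_add hn0]
    congr 1
    ring
  rw [this, Real.mul_rpow hn0.le ht.le]
  ring

end Mollifier

theorem wNorm_le_of_forall_norm_le {d : ℕ} {𝔹 : Type*} [NormedAddCommGroup 𝔹]
    [NormedSpace ℝ 𝔹] {ρ : EuclideanSpace ℝ (Fin d) → ℝ} (hρ : ∀ x, 0 < ρ x) {k : ℕ} {σ : ℝ}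
    {g : EuclideanSpace ℝ (Fin d) → 𝔹} {B : ℕ → ℝ} {B' : ℝ} (hB : ∀ j, 0 ≤ B j) (hB' : 0 ≤ B')
    (hsup : ∀ j ≤ k, ∀ x, ∀ y ∈ Metric.ball x 1, ‖iteratedFDeriv ℝ j g y‖ ≤ ρ x * B j)
    (hhol : 0 < σ → ∀ x, ∀ y ∈ Metric.ball x 1, ∀ y' ∈ Metric.ball x 1, y ≠ y' →
      ‖iteratedFDeriv ℝ k g y - iteratedFDeriv ℝ k g y'‖ ≤ ρ x * B' * ‖y - y'‖ ^ σ) :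
    wNorm ρ k σ g ≤ ENNReal.ofReal (∑ j ∈ Finset.range (k + 1), B j + B') := by
  refine iSup_le fun x ↦ ?_
  rw [ENNReal.inv_mul_le_iff (by simpa using hρ x) ENNReal.ofReal_ne_top,
    ← ENNReal.ofReal_mul (hρ x).le, mul_add, Finset.mul_sum,
    ENNReal.ofReal_add (Finset.sum_nonneg fun j _ ↦ mul_nonneg (hρ x).le (hB j))
      (mul_nonneg (hρ x).le hB'),
    ENNReal.ofReal_sum_of_nonneg fun j _ ↦ mul_nonneg (hρ x).le (hB j)]
  refine add_le_add (Finset.sum_le_sum fun j hj ↦ ?_) ?_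
  · refine iSup₂_le fun y hy ↦ ?_
    rw [← enorm_eq_nnnorm, ← ofReal_norm]
    exact ENNReal.ofReal_le_ofReal (hsup j (by have := Finset.mem_range.1 hj; omega) x y hy)
  · split_ifs with hσ
    · refine iSup₂_le fun y hy ↦ iSup₂_le fun y' hy' ↦ iSup_le fun hne ↦ ?_
      refine ENNReal.ofReal_le_ofReal ?_
      have : 0 < ‖y - y'‖ := norm_pos_iff.2 (sub_ne_zero.2 hne)
      rw [div_le_iff₀ (by positivity)]
      exact hhol hσ x y hy y' hy' hne
    · exact zero_le

/-- Smoothing estimate for mollifications: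
`‖f_n‖_{C^γ_ρ} ≤ C n^{γ−α} ‖f‖_{C^α_ρ}` for `0 ≤ α ≤ γ ≤ 2`. -/
theorem mollify_smoothing {d : ℕ} {𝔹 : Type*} [NormedAddCommGroup 𝔹] [NormedSpace ℝ 𝔹]
    [CompleteSpace 𝔹]
    (ρ : EuclideanSpace ℝ (Fin d) → ℝ) (hρ : IsPolyWeight ρ)
    (α γ : ℝ) (hα : 0 ≤ α) (hαγ : α ≤ γ) (hγ : γ ≤ 2)
    (φ : EuclideanSpace ℝ (Fin d) → ℝ)
    (hφsmooth : ContDiff ℝ (⊤ : ℕ∞) φ) (hφsupp : HasCompactSupport φ)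
    (hφpos : ∀ x, 0 ≤ φ x) (hφint : ∫ x : EuclideanSpace ℝ (Fin d), φ x = 1)
    (hφsymm : ∀ x, φ (-x) = φ x) :
    ∃ C : ℝ, 0 < C ∧
      ∀ f : EuclideanSpace ℝ (Fin d) → 𝔹,
        ContDiff ℝ (⌊α⌋₊ : ℕ∞) f → wNormE ρ α f ≠ ⊤ →
        ∀ n : ℕ, 1 ≤ n →
          wNormE ρ γ (mollify φ n f)
            ≤ ENNReal.ofReal (C * (n : ℝ) ^ (γ - α)) * wNormE ρ α f := by
  obtain ⟨D, hD1, hD⟩ := hρ.exists_le_mul (R := 1) zero_le_one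
  obtain ⟨m, hm⟩ : ∃ m, ⌊γ⌋₊ = ⌊α⌋₊ + m := Nat.exists_eq_add_of_le (Nat.floor_mono hαγ)
  have hαa : (⌊α⌋₊ : ℝ) ≤ α := Nat.floor_le hα
  have hγK : (⌊γ⌋₊ : ℝ) ≤ γ := Nat.floor_le (hα.trans hαγ)
  have hγK1 : γ < ⌊γ⌋₊ + 1 := Nat.lt_floor_add_one γ
  have hmr : (⌊γ⌋₊ : ℝ) = ⌊α⌋₊ + m := by exact_mod_cast hm
  have hA : 0 ≤ α - ⌊α⌋₊ := sub_nonneg.2 hαa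
  obtain ⟨C₂, hC₂, hhol⟩ := exists_norm_iteratedFDeriv_mollify_sub_le_rpow (𝔹 := 𝔹) hρ hφsmooth
    hφsupp ⌊α⌋₊ hA m (σ := γ - ⌊γ⌋₊) (by linarith) (by linarith) (by
      rintro rfl
      rw [Nat.cast_zero] at hmr
      linarith)
  have hsup : ∀ j, ∃ C, 0 < C ∧ (j ≤ ⌊γ⌋₊ → ∀ f : EuclideanSpace ℝ (Fin d) → 𝔹,
      ContDiff ℝ ⌊α⌋₊ f → wNormE ρ α f ≠ ⊤ → ∀ n : ℕ, 1 ≤ n → ∀ x,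
        ‖iteratedFDeriv ℝ j (mollify φ n f) x‖ ≤
          C * (n : ℝ) ^ (γ - α) * (ρ x * (wNormE ρ α f).toReal)) := by
    intro j
    rcases le_or_gt j ⌊α⌋₊ with hj | hj
    · obtain ⟨C, hC, h⟩ := exists_norm_iteratedFDeriv_mollify_le (𝔹 := 𝔹) hρ hφsmooth hφsupp
        ⌊α⌋₊ (α - ⌊α⌋₊)
      refine ⟨C, hC, fun _ f hf hfin n hn x ↦ (h f hf hfin n hn j hj x).trans ?_⟩
      have hn1 : (1 : ℝ) ≤ n := by exact_mod_cast hn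
      refine mul_le_mul_of_nonneg_right ?_ (mul_nonneg (hρ.1 x).le ENNReal.toReal_nonneg)
      exact le_mul_of_one_le_right hC.le (Real.one_le_rpow hn1 (by linarith))
    · obtain ⟨i, rfl⟩ : ∃ i, j = ⌊α⌋₊ + (i + 1) := ⟨j - ⌊α⌋₊ - 1, by omega⟩
      obtain ⟨C, hC, h⟩ := exists_norm_iteratedFDeriv_add_mollify_le (𝔹 := 𝔹) hρ hφsmooth
        hφsupp ⌊α⌋₊ hA i
      refine ⟨C, hC, fun hjK f hf hfin n hn x ↦ (h f hf hfin n hn x).trans ?_⟩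
      have hn1 : (1 : ℝ) ≤ n := by exact_mod_cast hn
      have hjK' : (⌊α⌋₊ : ℝ) + (i + 1 : ℕ) ≤ ⌊γ⌋₊ := by exact_mod_cast hjK
      refine mul_le_mul_of_nonneg_right ?_ (mul_nonneg (hρ.1 x).le ENNReal.toReal_nonneg)
      exact mul_le_mul_of_nonneg_left
        (Real.rpow_le_rpow_of_exponent_le hn1 (by linarith)) hC.le
  choose C₁ hC₁ hsup using hsup
  refine ⟨∑ j ∈ Finset.range (⌊γ⌋₊ + 1), C₁ j * D + C₂, add_pos_of_nonneg_of_pos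
    (Finset.sum_nonneg fun j _ ↦ mul_nonneg (hC₁ j).le (by linarith)) hC₂,
    fun f hf hfin n hn ↦ ?_⟩
  have hf' : ContDiff ℝ ⌊α⌋₊ f := by exact_mod_cast hf
  set M := (wNormE ρ α f).toReal with hMdef
  have hM : 0 ≤ M := ENNReal.toReal_nonneg
  rw [← ENNReal.ofReal_toReal hfin, ← ENNReal.ofReal_mul' hM]
  have key := wNorm_le_of_forall_norm_le (k := ⌊γ⌋₊) (σ := γ - ⌊γ⌋₊) (g := mollify φ n f) hρ.1
    (B := fun j ↦ C₁ j * D * ((n : ℝ) ^ (γ - α) * M)) (B' := C₂ * ((n : ℝ) ^ (γ - α) * M))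
    (fun j ↦ mul_nonneg (mul_nonneg (hC₁ j).le (by linarith)) (by positivity)) (by positivity)
    (fun j hj x y hy ↦ by
      refine (hsup j hj f hf' hfin n hn y).trans ?_
      have hw := hD x y (mem_ball_iff_norm.1 hy).le
      have := hC₁ j
      calc C₁ j * (n : ℝ) ^ (γ - α) * (ρ y * M)
          ≤ C₁ j * (n : ℝ) ^ (γ - α) * (D * ρ x * M) := by gcongr
        _ = _ := by ring)
    (fun _ x y hy y' hy' hne ↦ by
      have h := hhol f hf' hfin n hn x y hy y' hy' hne
      rw [← hm, show (m : ℝ) + (γ - ⌊γ⌋₊) - (α - ⌊α⌋₊) = γ - α by linarith] at h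
      refine h.trans_eq ?_
      rw [hMdef, wNormE]
      ring)
  refine key.trans_eq ?_
  rw [← Finset.sum_mul]
  congr 1
  ring
end
end
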